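/- arXiv:0810.3374 — 2 statements merged into one kernel-verified Lean document; each statement's English description precedes it below -/
import Mathlib

section
/- Let F(X,Y) ∈ ℤ[X,Y] be an irreducible binary cubic form with positive discriminant D(F). Suppose the automorphism group Aut(F) = {A ∈ GL₂(ℤ) : F(A·(X,Y)) = F(X,Y)} is nontrivial. If D(F) ≥ 2.56·10¹⁸, then the number of pairs (x,y) ∈ ℤ² with F(x,y) = 1 is either 0 or 3. -/
/-- The binary cubic form with coefficients `a, b, c, d`. -/
def cubicForm (a b c d : ℤ) (x y : ℤ) : ℤ :=
  a * x ^ 3 + b * x ^ 2 * y + c * x * y ^ 2 + d * y ^ 3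

/-- The discriminant of the binary cubic form `aX³ + bX²Y + cXY² + dY³`. -/
def cubicDisc (a b c d : ℤ) : ℤ :=
  18 * a * b * c * d - 4 * b ^ 3 * d + b ^ 2 * c ^ 2 - 4 * a * c ^ 3 - 27 * a ^ 2 * d ^ 2

section Part1

open Finset in
lemma dd_bound {ι : Type*} [DecidableEq ι] (v : ι → ℝ) (s : Finset ι) :
    Set.InjOn v s → ∀ N : ℕ, s.card = N + 1 → ∀ t : ℝ, 0 ≤ t →
    ‖∑ i ∈ s, ((Lagrange.nodalWeight s v i : ℝ) : ℂ) * Complex.exp (Complex.I * ((v i * t : ℝ) : ℂ))‖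
      ≤ t ^ N / (N.factorial : ℝ) := by
  induction s using Finset.induction_on with
  | empty => intro _ N h; simp at h
  | insert a s ha ih =>
    intro hinj N hN t ht
    rw [card_insert_of_notMem ha] at hN
    have hsN : s.card = N := by omega
    rcases N with _ | M
    · have : s = ∅ := by simpa using hsN
      subst this
      simp [Lagrange.nodalWeight]
      rw [← Complex.ofReal_mul, mul_comm, Complex.norm_exp_ofReal_mul_I]
    · have hinj' : Set.InjOn v s := hinj.mono (by simp)
      have ih' := ih hinj' M hsN
      have hw : ∀ i ∈ s, Lagrange.nodalWeight (insert a s) v i * (v i - v a)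
          = Lagrange.nodalWeight s v i := by
        intro i hi
        have hia : i ≠ a := fun h => ha (h ▸ hi)
        have hne : v i - v a ≠ 0 := by
          rw [sub_ne_zero]
          intro h
          exact hia (hinj (by simp [hi]) (by simp) h)
        unfold Lagrange.nodalWeight
        rw [erase_insert_of_ne hia.symm, prod_insert (by simp [ha])]
        field_simp
      have hsum : ∑ i ∈ insert a s, Lagrange.nodalWeight (insert a s) v i = 0 := by
        have h := Lagrange.coeff_eq_sum hinj (P := 1)
          (by rw [Polynomial.degree_one, card_insert_of_notMem ha]; exact_mod_cast Nat.succ_pos _)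
        rw [card_insert_of_notMem ha, hsN, Polynomial.coeff_one] at h
        simp only [Lagrange.nodalWeight, prod_inv_distrib]
        simpa using h.symm
      set w := fun i => Lagrange.nodalWeight (insert a s) v i with hwdef
      let f : ℝ → ℂ := fun x => ∑ i ∈ insert a s, (w i : ℂ) *
        Complex.exp (Complex.I * (((v i - v a) * x : ℝ) : ℂ))
      let f' : ℝ → ℂ := fun x => ∑ i ∈ insert a s, (w i : ℂ) *
        (Complex.exp (Complex.I * (((v i - v a) * x : ℝ) : ℂ)) * (Complex.I * ((v i - v a : ℝ) : ℂ)))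
      have hf : ∀ x, HasDerivAt f (f' x) x := by
        intro x
        apply HasDerivAt.fun_sum
        intro i _
        apply HasDerivAt.const_mul
        apply HasDerivAt.cexp
        apply HasDerivAt.const_mul
        have : HasDerivAt (fun y : ℝ => (v i - v a) * y) (v i - v a) x := by
          simpa using (hasDerivAt_id x).const_mul (v i - v a)
        exact this.ofReal_comp
      have hfn : ∀ x, ‖f x‖ = ‖∑ i ∈ insert a s, (w i : ℂ) *
          Complex.exp (Complex.I * ((v i * x : ℝ) : ℂ))‖ := by
        intro x
        have : f x = Complex.exp (((-(v a * x) : ℝ) : ℂ) * Complex.I) * ∑ i ∈ insert a s, (w i : ℂ) *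
          Complex.exp (Complex.I * ((v i * x : ℝ) : ℂ)) := by
          rw [mul_sum]
          apply sum_congr rfl
          intro i _
          rw [mul_left_comm, ← Complex.exp_add]
          congr 2
          push_cast; ring
        rw [this, norm_mul, Complex.norm_exp_ofReal_mul_I, one_mul]
      have hf'n : ∀ x, ‖f' x‖ = ‖∑ i ∈ s, ((Lagrange.nodalWeight s v i : ℝ) : ℂ) *
          Complex.exp (Complex.I * ((v i * x : ℝ) : ℂ))‖ := by
        intro x
        have : f' x = Complex.I * (Complex.exp (((-(v a * x) : ℝ) : ℂ) * Complex.I) * ∑ i ∈ s,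
          ((Lagrange.nodalWeight s v i : ℝ) : ℂ) *
          Complex.exp (Complex.I * ((v i * x : ℝ) : ℂ))) := by
          simp only [f']
          rw [sum_insert ha, mul_sum, mul_sum]
          simp only [sub_self, Complex.ofReal_zero, mul_zero, zero_add]
          apply sum_congr rfl
          intro i hi
          rw [← hw i hi]
          have e : Complex.exp (Complex.I * (((v i - v a) * x : ℝ) : ℂ)) =
            Complex.exp (((-(v a * x) : ℝ) : ℂ) * Complex.I) *
              Complex.exp (Complex.I * ((v i * x : ℝ) : ℂ)) := by
            rw [← Complex.exp_add]; congr 1; push_cast; ring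
          rw [e]
          push_cast
          ring
        rw [this, norm_mul, norm_mul, Complex.norm_exp_ofReal_mul_I, one_mul, Complex.norm_I, one_mul]
      rw [← hfn]
      have hB : ∀ x : ℝ, HasDerivAt (fun x : ℝ => x ^ (M+1) / ((M+1).factorial : ℝ))
          (x ^ M / (M.factorial : ℝ)) x := by
        intro x
        have := (hasDerivAt_pow (M+1) x).div_const ((M+1).factorial : ℝ)
        have e : x ^ M / (M.factorial : ℝ) =
            ((M + 1 : ℕ) : ℝ) * x ^ (M + 1 - 1) / ((M + 1).factorial : ℝ) := by
          rw [Nat.factorial_succ, Nat.add_sub_cancel]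
          have h1 : (M.factorial : ℝ) ≠ 0 := by positivity
          have h2 : ((M + 1 : ℕ) : ℝ) ≠ 0 := by positivity
          rw [Nat.cast_mul]
          field_simp
        rw [e]
        exact this
      refine image_norm_le_of_norm_deriv_right_le_deriv_boundary (a := 0) (b := t) (f := f) (f' := f')
        (fun x _ => (hf x).continuousAt.continuousWithinAt)
        (fun x _ => (hf x).hasDerivWithinAt) ?_ hB ?_ ⟨ht, le_rfl⟩
      · have : f 0 = 0 := by
          simp only [f, mul_zero, Complex.ofReal_zero, Complex.exp_zero, mul_one]
          rw [← Complex.ofReal_sum]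
          exact_mod_cast hsum
        simp [this]
      · intro x hx
        rw [hf'n]
        exact ih' x hx.1

end Part1

section Part2

open Finset in
lemma choose_prod (y : ℝ) (k : ℕ) :
    Ring.choose y k = (∏ j ∈ range k, (y - j)) / k.factorial := by
  rw [Ring.choose_eq_smul, smul_eq_mul, inv_mul_eq_div]
  congr 1
  induction k with
  | zero => simp
  | succ k ih =>
    rw [descPochhammer_succ_right, Polynomial.smeval_mul, ih, prod_range_succ]
    congr 1
    simp [Polynomial.smeval_sub, Polynomial.smeval_natCast]

open Finset in
lemma choose_int (a : ℤ) (k : ℕ) :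
    ∃ m : ℤ, (3:ℝ) ^ (k + padicValNat 3 k.factorial) * Ring.choose ((a:ℝ)/3) k = m := by
  have : Fact (Nat.Prime 3) := ⟨Nat.prime_three⟩
  set v := padicValNat 3 k.factorial with hv
  obtain ⟨m, hm⟩ : 3 ^ v ∣ k.factorial := pow_padicValNat_dvd
  have hk0 : k.factorial ≠ 0 := Nat.factorial_ne_zero k
  have hm0 : m ≠ 0 := by rintro rfl; simp at hm; exact hk0 hm
  have hcop : Nat.Coprime 3 m := by
    rw [Nat.Prime.coprime_iff_not_dvd Nat.prime_three]
    intro hd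
    have : 3 ^ (v + 1) ∣ k.factorial := by
      rw [hm, pow_succ]; exact Nat.mul_dvd_mul_left _ hd
    exact pow_succ_padicValNat_not_dvd hk0 this
  have hcopZ : IsCoprime (3 : ℤ) (m : ℤ) := by exact_mod_cast Nat.isCoprime_iff_coprime.mpr hcop
  obtain ⟨u, w, huw⟩ := hcopZ
  have hdvd : (m : ℤ) ∣ ∏ j ∈ range k, (a - 3 * (j:ℤ)) := by
    have h1 : (k.factorial : ℤ) ∣ ∏ j ∈ range k, (-(u * a) + (j : ℤ)) :=
      Nat.factorial_coe_dvd_prod k _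
    have h2 : (m : ℤ) ∣ ∏ j ∈ range k, (-(u * a) + (j : ℤ)) :=
      dvd_trans ⟨3 ^ v, by rw [hm]; push_cast; ring⟩ h1
    have h3 : (∏ j ∈ range k, (a - 3 * (j:ℤ))) ≡ ∏ j ∈ range k, ((-3) * (-(u * a) + (j : ℤ))) [ZMOD m] := by
      apply Int.ModEq.prod
      intro j _
      rw [Int.modEq_iff_dvd]
      refine ⟨- w * a, ?_⟩
      linear_combination (a) * huw
    rw [prod_mul_distrib] at h3
    exact (Int.ModEq.dvd_iff h3).mpr (dvd_mul_of_dvd_right h2 _)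
  obtain ⟨q, hq⟩ := hdvd
  refine ⟨q, ?_⟩
  rw [choose_prod]
  have e : ∏ j ∈ range k, ((a:ℝ)/3 - j) = (∏ j ∈ range k, ((a:ℝ) - 3 * j)) / 3 ^ k := by
    rw [eq_div_iff (by positivity)]
    rw [show (3:ℝ)^k = ∏ j ∈ range k, (3:ℝ) by simp, ← prod_mul_distrib]
    apply prod_congr rfl
    intro j _
    ring
  have hq' : (∏ j ∈ range k, ((a:ℝ) - 3 * j)) = m * q := by exact_mod_cast hq
  have hm' : (k.factorial : ℝ) = 3 ^ v * m := by exact_mod_cast hm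
  have : (m:ℝ) ≠ 0 := by exact_mod_cast hm0
  rw [e, hq', hm', pow_add]
  field_simp

lemma two_mul_v3_le (k : ℕ) : 2 * padicValNat 3 k.factorial ≤ k := by
  have : Fact (Nat.Prime 3) := ⟨Nat.prime_three⟩
  have := sub_one_mul_padicValNat_factorial (p := 3) k
  omega

end Part2

section Part3

open Finset

noncomputable def padc (e : ℝ) (r i : ℕ) : ℝ := Ring.choose ((r:ℝ) + e) i * Ring.choose ((r:ℝ) - e) (r - i)

noncomputable def padP (e : ℝ) (r : ℕ) : Polynomial ℂ :=
  ∑ i ∈ range (r + 1), Polynomial.C ((padc e r i : ℝ) : ℂ) * Polynomial.X ^ i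

lemma padP_eval (e : ℝ) (r : ℕ) (x : ℂ) :
    (padP e r).eval x = ∑ i ∈ range (r + 1), ((padc e r i : ℝ) : ℂ) * x ^ i := by
  simp [padP, Polynomial.eval_finsetSum]

lemma choose_nonneg_aux (e : ℝ) (he : |e| ≤ 1) (r i : ℕ) (hi : i ≤ r) : 0 ≤ Ring.choose ((r:ℝ) + e) i := by
  rw [choose_prod]
  apply div_nonneg _ (by positivity)
  apply prod_nonneg
  intro j hj
  have hj' : j + 1 ≤ r := by have := mem_range.mp hj; omega
  have : (j:ℝ) + 1 ≤ r := by exact_mod_cast hj'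
  have := (abs_le.mp he).1
  linarith

lemma padc_nonneg (e : ℝ) (he : |e| ≤ 1) (r i : ℕ) (hi : i ≤ r) : 0 ≤ padc e r i := by
  unfold padc
  apply mul_nonneg (choose_nonneg_aux e he r i hi)
  rw [sub_eq_add_neg]
  exact choose_nonneg_aux (-e) (by simpa using he) r _ (by omega)

lemma vander (a b : ℝ) (n : ℕ) : ∑ i ∈ range (n + 1), Ring.choose a i * Ring.choose b (n - i) = Ring.choose (a + b) n := by
  rw [Ring.add_choose_eq n (Commute.all a b), Nat.sum_antidiagonal_eq_sum_range_succ_mk]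

lemma padc_sum (e : ℝ) (r : ℕ) : ∑ i ∈ range (r + 1), padc e r i = ((2 * r).choose r : ℝ) := by
  unfold padc
  rw [vander, show (r:ℝ) + e + (r - e) = ((2 * r : ℕ) : ℝ) by push_cast; ring, Ring.choose_natCast]

lemma padP_norm (e : ℝ) (he : |e| ≤ 1) (r : ℕ) (x : ℂ) (hx : ‖x‖ = 1) : ‖(padP e r).eval x‖ ≤ 4 ^ r := by
  rw [padP_eval]
  calc _ ≤ ∑ i ∈ range (r + 1), padc e r i := by
        apply norm_sum_le_of_le
        intro i hi
        rw [norm_mul, norm_pow, hx, one_pow, mul_one, Complex.norm_real, Real.norm_eq_abs,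
          abs_of_nonneg (padc_nonneg e he r i (by have := mem_range.mp hi; omega))]
    _ = ((2 * r).choose r : ℝ) := padc_sum e r
    _ ≤ 4 ^ r := by
        have := Nat.choose_le_two_pow (2 * r) r
        rw [pow_mul] at this
        exact_mod_cast this

lemma padP_zbasis (e : ℝ) (r : ℕ) (x : ℂ) : (padP e r).eval x =
    ∑ k ∈ range (r + 1), ((Ring.choose ((r:ℝ) + e) k : ℝ) : ℂ) * ((2 * r - k).choose (r - k) : ℂ) * (x - 1) ^ k := by
  rw [padP_eval]
  have h1 : ∀ i ∈ range (r + 1), ((padc e r i : ℝ) : ℂ) * x ^ i =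
      ∑ k ∈ range (r + 1), ((padc e r i : ℝ) : ℂ) * (i.choose k : ℂ) * (x - 1) ^ k := by
    intro i hi
    have hi' : i + 1 ≤ r + 1 := by have := mem_range.mp hi; omega
    nth_rewrite 1 [show x = (x - 1) + 1 by ring]
    rw [add_pow, mul_sum]
    rw [← sum_subset (range_mono hi')]
    · apply sum_congr rfl
      intro k _
      simp; ring
    · intro k _ hk
      rw [Nat.choose_eq_zero_of_lt (by simpa using hk)]
      simp
  rw [sum_congr rfl h1, sum_comm]
  apply sum_congr rfl
  intro k hk
  have hk' : k ≤ r := by have := mem_range.mp hk; omega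
  rw [← sum_mul]
  congr 1
  have h2 : ∑ i ∈ range (r + 1), padc e r i * (i.choose k : ℝ) =
      Ring.choose ((r:ℝ) + e) k * ((2 * r - k).choose (r - k) : ℝ) := by
    have h3 : ((2 * r - k).choose (r - k) : ℝ) = Ring.choose (((r:ℝ) + e - k) + (r - e)) (r - k) := by
      rw [show (r:ℝ) + e - k + (r - e) = ((2 * r - k : ℕ) : ℝ) by
        rw [Nat.cast_sub (by omega)]; push_cast; ring, Ring.choose_natCast]
    rw [h3, ← vander ((r:ℝ) + e - k) (r - e) (r - k), mul_sum]
    have h4 : range (r + 1) = (range (k + (r - k + 1))) := by congr 1; omega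
    rw [h4, sum_range_add]
    rw [sum_eq_zero, zero_add]
    · apply sum_congr rfl
      intro j hj
      have := Ring.choose_smul_choose ((r:ℝ) + e) (n := k + j) (k := k) (by omega)
      rw [nsmul_eq_mul, Nat.add_sub_cancel_left] at this
      unfold padc
      rw [← mul_assoc, ← this, Nat.sub_sub]
      ring
    · intro i hi
      rw [Nat.choose_eq_zero_of_lt (by simpa using hi)]
      simp
  exact_mod_cast congrArg (fun z : ℝ => (z : ℂ)) h2

lemma prodA (i k : ℕ) : ∏ j ∈ (range (i + k + 1)).erase i, ((i:ℝ) - j) =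
    (-1) ^ k * (i.factorial * k.factorial) := by
  have h : (range (i + k + 1)).erase i = range i ∪ (range k).map (addLeftEmbedding (i + 1)) := by
    ext j
    simp only [mem_erase, mem_range, mem_union, mem_map, addLeftEmbedding_apply]
    constructor
    · rintro ⟨h1, h2⟩
      by_cases h : j < i
      · exact Or.inl h
      · exact Or.inr ⟨j - (i + 1), by omega, by omega⟩
    · rintro (h | ⟨a, h1, h2⟩) <;> omega
  rw [h, prod_union, prod_map]
  · have h1 : ∏ j ∈ range i, ((i:ℝ) - j) = i.factorial := by
      rw [← prod_range_reflect, ← prod_range_add_one_eq_factorial]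
      push_cast
      apply prod_congr rfl
      intro j hj
      have := mem_range.mp hj
      rw [Nat.cast_sub (by omega), Nat.cast_sub (by omega)]; push_cast; ring
    have h2 : ∏ j ∈ range k, ((i:ℝ) - ((addLeftEmbedding (i + 1) j : ℕ) : ℝ)) = (-1) ^ k * k.factorial := by
      rw [← prod_range_add_one_eq_factorial]
      push_cast
      rw [show (-1:ℝ) ^ k = ∏ j ∈ range k, (-1:ℝ) by simp, ← prod_mul_distrib]
      apply prod_congr rfl
      intro j hj
      simp; ring
    rw [h1, h2]; ring
  · rw [disjoint_left]
    intro j hj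
    simp only [mem_map, addLeftEmbedding_apply, not_exists, not_and]
    intro a _ ha
    have := mem_range.mp hj
    omega

lemma prod_refl_aux (c : ℝ) (i k : ℕ) : ∏ j ∈ range k, (((i + k : ℕ) : ℝ) + c - j) = ∏ j ∈ range k, (((i + j : ℕ) : ℝ) + 1 + c) := by
  rw [← prod_range_reflect]
  apply prod_congr rfl
  intro j hj
  have := mem_range.mp hj
  rw [Nat.cast_sub (by omega), Nat.cast_sub (by omega)]; push_cast; ring

lemma prodB (e : ℝ) (i k : ℕ) :
    Ring.choose (((i + k : ℕ) : ℝ) - e) i * Ring.choose (((i + k : ℕ) : ℝ) + e) k * (i.factorial * k.factorial)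
      * ((-1) ^ k * ∏ j ∈ range (i + k + 1), ((i:ℝ) - j + e)) =
    e * ∏ m ∈ range (i + k), (((m:ℝ) + 1) ^ 2 - e ^ 2) := by
  have f1 : (i.factorial : ℝ) ≠ 0 := by positivity
  have f2 : (k.factorial : ℝ) ≠ 0 := by positivity
  have e1 : Ring.choose (((i + k : ℕ) : ℝ) - e) i * Ring.choose (((i + k : ℕ) : ℝ) + e) k * (i.factorial * k.factorial)
      = (∏ j ∈ range i, (((k + i : ℕ) : ℝ) + (-e) - j)) * ∏ j ∈ range k, (((i + k : ℕ) : ℝ) + e - j) := by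
    rw [choose_prod, choose_prod, Nat.add_comm k i, ← sub_eq_add_neg]
    field_simp
  rw [e1, prod_refl_aux, prod_refl_aux]
  have e2 : ∏ j ∈ range (i + k + 1), ((i:ℝ) - j + e) =
      (∏ j ∈ range i, (((j : ℕ) : ℝ) + 1 + e)) * e * ((-1) ^ k * ∏ j ∈ range k, (((j : ℕ) : ℝ) + 1 - e)) := by
    rw [show i + k + 1 = i + 1 + k by ring, prod_range_add, prod_range_succ]
    congr 1
    · congr 1
      · have := prod_refl_aux e 0 i
        simp only [zero_add] at this
        rw [← this]
        apply prod_congr rfl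
        intro j _
        ring
      · simp
    · rw [show (-1:ℝ) ^ k = ∏ j ∈ range k, (-1:ℝ) by simp, ← prod_mul_distrib]
      apply prod_congr rfl
      intro j hj
      push_cast; ring
  have e3 : ∏ m ∈ range (i + k), (((m:ℝ) + 1) ^ 2 - e ^ 2) =
      (∏ m ∈ range (i + k), ((m:ℝ) + 1 + e)) * ∏ m ∈ range (k + i), ((m:ℝ) + 1 - e) := by
    rw [Nat.add_comm k i, ← prod_mul_distrib]
    apply prod_congr rfl
    intro j _
    ring
  rw [e2, e3, prod_range_add, prod_range_add]
  have h1 : ((-1:ℝ) ^ k) * (-1) ^ k = 1 := by rw [← mul_pow]; simp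
  simp only [← sub_eq_add_neg]
  have e4 : ∏ j ∈ range i, (((k + j : ℕ) : ℝ) + 1 - e) = ∏ x ∈ range i, (((k + x : ℕ):ℝ) + 1 - e) := rfl
  linear_combination ((∏ j ∈ range i, (((k + j : ℕ) : ℝ) + 1 - e)) * (∏ j ∈ range k, (((i + j : ℕ) : ℝ) + 1 + e)) *
    (∏ j ∈ range i, (((j : ℕ) : ℝ) + 1 + e)) * e * ∏ j ∈ range k, (((j : ℕ) : ℝ) + 1 - e)) * h1

noncomputable def padM (r : ℕ) : ℝ := (1 / 3) * ∏ m ∈ range r, (((m:ℝ) + 1) ^ 2 - (1 / 3) ^ 2)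

lemma padM_nonneg (r : ℕ) : 0 ≤ padM r := by
  unfold padM
  apply mul_nonneg (by norm_num)
  apply prod_nonneg
  intro m _
  have : (0:ℝ) ≤ m := by positivity
  nlinarith

lemma padM_le (r : ℕ) : padM r ≤ (1 / 3) * (r.factorial : ℝ) ^ 2 := by
  unfold padM
  apply mul_le_mul_of_nonneg_left _ (by norm_num)
  rw [← prod_range_add_one_eq_factorial]
  push_cast
  rw [← prod_pow]
  apply prod_le_prod
  · intro m _
    have : (0:ℝ) ≤ m := by positivity
    nlinarith
  · intro m _
    nlinarith

lemma padM_bound (r : ℕ) : padM r / ((2 * r + 1).factorial : ℝ) ≤ 1 / (3 * 4 ^ r) := by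
  have h1 : 4 ^ r * r.factorial ^ 2 ≤ (2 * r + 1).factorial := by
    have := Nat.four_pow_le_two_mul_add_one_mul_central_binom r
    have h2 := Nat.choose_mul_factorial_mul_factorial (n := 2 * r) (k := r) (by omega)
    rw [show 2 * r - r = r by omega] at h2
    rw [Nat.factorial_succ, ← h2]
    nlinarith [Nat.mul_le_mul_right (r.factorial ^ 2) this]
  have h1' : (4:ℝ) ^ r * (r.factorial:ℝ) ^ 2 ≤ ((2 * r + 1).factorial : ℝ) := by exact_mod_cast h1
  rw [div_le_div_iff₀ (by positivity) (by positivity)]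
  have := padM_le r
  have h4 : (0:ℝ) < 4 ^ r := by positivity
  nlinarith

noncomputable def padv : ℕ ⊕ ℕ → ℝ := Sum.elim (fun i => (i:ℝ)) (fun i => (i:ℝ) + 1 / 3)

lemma padv_inj : Function.Injective padv := by
  rintro (a | a) (b | b) h
  · simpa [padv] using h
  · exfalso
    simp only [padv, Sum.elim_inl, Sum.elim_inr] at h
    have : ((3 * a : ℤ) : ℝ) = ((3 * b + 1 : ℤ) : ℝ) := by push_cast; linarith
    have := Int.cast_injective this
    omega
  · exfalso
    simp only [padv, Sum.elim_inl, Sum.elim_inr] at h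
    have : ((3 * b : ℤ) : ℝ) = ((3 * a + 1 : ℤ) : ℝ) := by push_cast; linarith
    have := Int.cast_injective this
    omega
  · simpa [padv] using h

lemma weight_inl (r i : ℕ) (hi : i ≤ r) :
    padM r * Lagrange.nodalWeight ((range (r + 1)).disjSum (range (r + 1))) padv (Sum.inl i) = - padc (1/3) r i := by
  obtain ⟨k, rfl⟩ := Nat.exists_eq_add_of_le hi
  have he : ((range (i + k + 1)).disjSum (range (i + k + 1))).erase (Sum.inl i) =
      ((range (i + k + 1)).erase i).disjSum (range (i + k + 1)) := by
    ext (x | x) <;> simp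
  rw [Lagrange.nodalWeight, he, prod_disjSum, prod_inv_distrib, prod_inv_distrib]
  simp only [padv, Sum.elim_inl, Sum.elim_inr]
  rw [prodA]
  have hB := prodB (-(1/3)) i k
  have hp : ∏ j ∈ range (i + k + 1), ((i:ℝ) - (j + 1 / 3)) = ∏ j ∈ range (i + k + 1), ((i:ℝ) - j + (-(1/3))) :=
    prod_congr rfl (fun j _ => by ring)
  rw [hp]
  have hne : ∏ j ∈ range (i + k + 1), ((i:ℝ) - j + (-(1/3))) ≠ 0 := by
    rw [prod_ne_zero_iff]
    intro j _ h
    have h1 : padv (Sum.inl i) = padv (Sum.inr j) := by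
      simp only [padv, Sum.elim_inl, Sum.elim_inr]; linarith
    exact absurd (padv_inj h1) (by simp)
  have h2 : padM (i + k) = -(-(1/3) * ∏ m ∈ range (i + k), (((m:ℝ) + 1) ^ 2 - (-(1/3)) ^ 2)) := by
    unfold padM; norm_num
  rw [h2, ← hB, padc, Nat.add_sub_cancel_left]
  have hs : ((-1:ℝ) ^ k) ≠ 0 := by positivity
  rw [sub_neg_eq_add, ← sub_eq_add_neg]
  have f1 : (i.factorial : ℝ) ≠ 0 := by positivity
  have f2 : (k.factorial : ℝ) ≠ 0 := by positivity
  generalize (∏ j ∈ range (i + k + 1), ((i:ℝ) - j + (-(1/3)))) = Z at hne ⊢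
  generalize Ring.choose (((i + k : ℕ):ℝ) - 1/3) _ = Y1
  generalize Ring.choose (((i + k : ℕ):ℝ) + 1/3) _ = Y2
  field_simp

lemma weight_inr (r i : ℕ) (hi : i ≤ r) :
    padM r * Lagrange.nodalWeight ((range (r + 1)).disjSum (range (r + 1))) padv (Sum.inr i) = padc (-(1/3)) r i := by
  obtain ⟨k, rfl⟩ := Nat.exists_eq_add_of_le hi
  have he : ((range (i + k + 1)).disjSum (range (i + k + 1))).erase (Sum.inr i) =
      (range (i + k + 1)).disjSum ((range (i + k + 1)).erase i) := by
    ext (x | x) <;> simp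
  rw [Lagrange.nodalWeight, he, prod_disjSum, prod_inv_distrib, prod_inv_distrib]
  simp only [padv, Sum.elim_inl, Sum.elim_inr, add_sub_add_right_eq_sub]
  rw [prodA]
  have hB := prodB (1/3) i k
  have hp : ∏ j ∈ range (i + k + 1), ((i:ℝ) + 1 / 3 - j) = ∏ j ∈ range (i + k + 1), ((i:ℝ) - j + (1/3)) :=
    prod_congr rfl (fun j _ => by ring)
  rw [hp]
  have hne : ∏ j ∈ range (i + k + 1), ((i:ℝ) - j + (1/3)) ≠ 0 := by
    rw [prod_ne_zero_iff]
    intro j _ h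
    have h1 : padv (Sum.inr i) = padv (Sum.inl j) := by
      simp only [padv, Sum.elim_inl, Sum.elim_inr]; linarith
    exact absurd (padv_inj h1) (by simp)
  rw [padM, ← hB, padc, Nat.add_sub_cancel_left]
  have hs : ((-1:ℝ) ^ k) ≠ 0 := by positivity
  rw [sub_neg_eq_add, ← sub_eq_add_neg]
  have f1 : (i.factorial : ℝ) ≠ 0 := by positivity
  have f2 : (k.factorial : ℝ) ≠ 0 := by positivity
  generalize (∏ j ∈ range (i + k + 1), ((i:ℝ) - j + (1/3))) = Z at hne ⊢
  generalize Ring.choose (((i + k : ℕ):ℝ) - 1/3) _ = Y1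
  generalize Ring.choose (((i + k : ℕ):ℝ) + 1/3) _ = Y2
  field_simp

lemma pade_err_pos (r : ℕ) (t : ℝ) (ht : 0 ≤ t) :
    ‖(padP (1/3) r).eval (Complex.exp (Complex.I * t)) - Complex.exp (Complex.I * ((t/3 : ℝ) : ℂ)) *
      (padP (-(1/3)) r).eval (Complex.exp (Complex.I * t))‖ ≤ t ^ (2 * r + 1) / (3 * 4 ^ r) := by
  have h := dd_bound padv ((range (r + 1)).disjSum (range (r + 1))) (padv_inj.injOn) (2 * r + 1)
    (by rw [card_disjSum, card_range]; ring) t ht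
  have h2 := mul_le_mul_of_nonneg_left h (padM_nonneg r)
  have e : (padP (1/3) r).eval (Complex.exp (Complex.I * t)) - Complex.exp (Complex.I * ((t/3 : ℝ) : ℂ)) *
      (padP (-(1/3)) r).eval (Complex.exp (Complex.I * t)) = - ((padM r : ℝ) : ℂ) *
      ∑ i ∈ (range (r + 1)).disjSum (range (r + 1)),
        ((Lagrange.nodalWeight ((range (r + 1)).disjSum (range (r + 1))) padv i : ℝ) : ℂ) *
          Complex.exp (Complex.I * ((padv i * t : ℝ) : ℂ)) := by
    rw [sum_disjSum, padP_eval, padP_eval, mul_add, mul_sum, mul_sum, mul_sum, sub_eq_add_neg, ← sum_neg_distrib]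
    congr 1
    · apply sum_congr rfl
      intro i hi
      have := weight_inl r i (by have := mem_range.mp hi; omega)
      rw [← neg_eq_iff_eq_neg.mpr this, ← Complex.exp_nat_mul]
      simp only [padv, Sum.elim_inl]
      push_cast
      ring_nf
    · apply sum_congr rfl
      intro i hi
      have := weight_inr r i (by have := mem_range.mp hi; omega)
      rw [← this, ← Complex.exp_nat_mul, mul_left_comm, ← Complex.exp_add]
      simp only [padv, Sum.elim_inr]
      push_cast
      ring_nf
  rw [e, norm_mul, norm_neg, Complex.norm_real, Real.norm_eq_abs, abs_of_nonneg (padM_nonneg r)]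
  refine h2.trans ?_
  have := padM_bound r
  calc _ = t ^ (2 * r + 1) * (padM r / ((2 * r + 1).factorial : ℝ)) := by ring
    _ ≤ t ^ (2 * r + 1) * (1 / (3 * 4 ^ r)) := by gcongr
    _ = _ := by ring

lemma padP_conj (e : ℝ) (r : ℕ) (x : ℂ) : (starRingEnd ℂ) ((padP e r).eval x) = (padP e r).eval ((starRingEnd ℂ) x) := by
  rw [padP_eval, padP_eval, map_sum]
  simp

lemma pade_err (r : ℕ) (t : ℝ) :
    ‖(padP (1/3) r).eval (Complex.exp (Complex.I * t)) - Complex.exp (Complex.I * ((t/3 : ℝ) : ℂ)) *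
      (padP (-(1/3)) r).eval (Complex.exp (Complex.I * t))‖ ≤ |t| ^ (2 * r + 1) / (3 * 4 ^ r) := by
  rcases le_total 0 t with ht | ht
  · rw [abs_of_nonneg ht]; exact pade_err_pos r t ht
  · rw [abs_of_nonpos ht]
    have h := pade_err_pos r (-t) (by linarith)
    rw [← Complex.norm_conj] at h
    rw [map_sub, map_mul, padP_conj, padP_conj, ← Complex.exp_conj, ← Complex.exp_conj, map_mul, map_mul,
      Complex.conj_I, Complex.conj_ofReal, Complex.conj_ofReal] at h
    have e1 : -Complex.I * ((-t : ℝ) : ℂ) = Complex.I * t := by push_cast; ring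
    have e2 : -Complex.I * ((-t / 3 : ℝ) : ℂ) = Complex.I * ((t / 3 : ℝ) : ℂ) := by push_cast; ring
    rw [e1, e2] at h
    exact h

end Part3

section Part4

open Finset Polynomial

lemma padP_coeff (e : ℝ) (r n : ℕ) : (padP e r).coeff n = if n ≤ r then ((padc e r n : ℝ) : ℂ) else 0 := by
  unfold padP
  rw [finsetSum_coeff]
  simp only [coeff_C_mul, coeff_X_pow, mul_ite, mul_one, mul_zero]
  rw [sum_ite_eq]
  simp only [mem_range, Nat.lt_succ_iff]

lemma padP_natDegree (e : ℝ) (r : ℕ) : (padP e r).natDegree ≤ r := by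
  rw [natDegree_le_iff_coeff_eq_zero]
  intro n hn
  rw [padP_coeff, if_neg (by omega)]

lemma padc_top (e : ℝ) (r : ℕ) : padc e r r = Ring.choose ((r:ℝ) + e) r := by
  simp [padc]

lemma padc_top_succ (e : ℝ) (r : ℕ) : padc e (r+1) (r+1) = padc e r r * ((r + 1 + e) / (r + 1)) := by
  rw [padc_top, padc_top, choose_prod, choose_prod, prod_range_succ', Nat.factorial_succ]
  have : ∏ k ∈ range r, (((r+1 : ℕ):ℝ) + e - ((k + 1 : ℕ) : ℝ)) = ∏ k ∈ range r, ((r:ℝ) + e - k) :=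
    prod_congr rfl (fun k _ => by push_cast; ring)
  rw [this]
  have f : (r.factorial : ℝ) ≠ 0 := by positivity
  push_cast
  have f2 : (r:ℝ) + 1 ≠ 0 := by positivity
  generalize ∏ k ∈ range r, ((r:ℝ) + e - k) = Z
  field_simp
  ring

lemma padc_top_ne (e : ℝ) (he : |e| < 1) (r : ℕ) : padc e r r ≠ 0 := by
  rw [padc_top, choose_prod]
  apply div_ne_zero _ (by positivity)
  rw [prod_ne_zero_iff]
  intro j hj
  have hj' : j + 1 ≤ r := by have := mem_range.mp hj; omega
  have : (j:ℝ) + 1 ≤ r := by exact_mod_cast hj'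
  have := (abs_lt.mp he).1
  apply ne_of_gt
  linarith

noncomputable def padD (r : ℕ) : Polynomial ℂ :=
  padP (1/3) r * padP (-(1/3)) (r+1) - padP (1/3) (r+1) * padP (-(1/3)) r

lemma padD_natDegree (r : ℕ) : (padD r).natDegree ≤ 2 * r + 1 := by
  unfold padD
  refine (natDegree_sub_le _ _).trans (max_le ?_ ?_)
  · refine natDegree_mul_le.trans ?_
    have := padP_natDegree (1/3) r
    have := padP_natDegree (-(1/3)) (r+1)
    omega
  · refine natDegree_mul_le.trans ?_
    have := padP_natDegree (-(1/3)) r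
    have := padP_natDegree (1/3) (r+1)
    omega

lemma padD_coeff (r : ℕ) : (padD r).coeff (2 * r + 1) ≠ 0 := by
  unfold padD
  rw [coeff_sub]
  have h1 : (padP (1/3) r * padP (-(1/3)) (r+1)).coeff (2 * r + 1) =
      ((padc (1/3) r r : ℝ) : ℂ) * ((padc (-(1/3)) (r+1) (r+1) : ℝ) : ℂ) := by
    rw [show 2 * r + 1 = r + (r + 1) by ring,
      coeff_mul_add_eq_of_natDegree_le (padP_natDegree _ _) (padP_natDegree _ _), padP_coeff, padP_coeff]
    simp
  have h2 : (padP (1/3) (r+1) * padP (-(1/3)) r).coeff (2 * r + 1) =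
      ((padc (1/3) (r+1) (r+1) : ℝ) : ℂ) * ((padc (-(1/3)) r r : ℝ) : ℂ) := by
    rw [show 2 * r + 1 = (r + 1) + r by ring,
      coeff_mul_add_eq_of_natDegree_le (padP_natDegree _ _) (padP_natDegree _ _), padP_coeff, padP_coeff]
    simp
  rw [h1, h2, padc_top_succ, padc_top_succ]
  have n1 := padc_top_ne (1/3) (by rw [abs_of_pos] <;> norm_num) r
  have n2 := padc_top_ne (-(1/3)) (by rw [abs_neg, abs_of_pos] <;> norm_num) r
  have f2 : (r:ℝ) + 1 ≠ 0 := by positivity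
  have : padc (1/3) r r * (padc (-(1/3)) r r * ((r + 1 + (-(1/3))) / (r + 1)))
      - padc (1/3) r r * ((r + 1 + 1/3) / (r + 1)) * padc (-(1/3)) r r
      = padc (1/3) r r * padc (-(1/3)) r r * (-(2/3) / (r + 1)) := by
    field_simp; ring
  have h3 : padc (1/3) r r * padc (-(1/3)) r r * (-(2/3) / ((r:ℝ) + 1)) ≠ 0 :=
    mul_ne_zero (mul_ne_zero n1 n2) (div_ne_zero (by norm_num) f2)
  rw [← this] at h3
  exact_mod_cast h3

lemma norm_expI (t : ℝ) : ‖Complex.exp (Complex.I * t)‖ = 1 := by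
  rw [mul_comm]; exact Complex.norm_exp_ofReal_mul_I t

lemma padD_bound (r : ℕ) (t : ℝ) (h0 : 0 ≤ t) (h1 : t ≤ 1) :
    ‖(padD r).eval (Complex.exp (Complex.I * t))‖ ≤ 2 * 4 ^ (r+1) * t ^ (2 * r + 1) := by
  set x := Complex.exp (Complex.I * t)
  have hx : ‖x‖ = 1 := norm_expI t
  set τ := Complex.exp (Complex.I * ((t/3 : ℝ) : ℂ))
  have e : (padD r).eval x = ((padP (1/3) r).eval x - τ * (padP (-(1/3)) r).eval x) * (padP (-(1/3)) (r+1)).eval x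
      - ((padP (1/3) (r+1)).eval x - τ * (padP (-(1/3)) (r+1)).eval x) * (padP (-(1/3)) r).eval x := by
    simp only [padD, eval_sub, eval_mul]; ring
  have b1 := pade_err_pos r t h0
  have b2 := pade_err_pos (r+1) t h0
  have b3 := padP_norm (-(1/3)) (by rw [abs_neg, abs_of_pos] <;> norm_num) r x hx
  have b4 := padP_norm (-(1/3)) (by rw [abs_neg, abs_of_pos] <;> norm_num) (r+1) x hx
  have c1 : t ^ (2 * r + 1) / (3 * 4 ^ r) ≤ t ^ (2 * r + 1) := by
    apply div_le_self (by positivity)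
    have : (1:ℝ) ≤ 4 ^ r := one_le_pow₀ (by norm_num)
    linarith
  have c2 : t ^ (2 * (r+1) + 1) / (3 * 4 ^ (r+1)) ≤ t ^ (2 * r + 1) := by
    refine (div_le_self (by positivity) ?_).trans (pow_le_pow_of_le_one h0 h1 (by omega))
    have : (1:ℝ) ≤ 4 ^ (r+1) := one_le_pow₀ (by norm_num)
    linarith
  have c3 : ‖(padP (-(1/3)) r).eval x‖ ≤ 4 ^ (r+1) :=
    b3.trans (pow_le_pow_right₀ (by norm_num) (by omega))
  rw [e]
  refine (norm_sub_le _ _).trans ?_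
  rw [norm_mul, norm_mul]
  have d1 := mul_le_mul (b1.trans c1) b4 (norm_nonneg _) (by positivity)
  have d2 := mul_le_mul (b2.trans c2) c3 (norm_nonneg _) (by positivity)
  linarith

lemma norm_exp_sub_ge (t : ℝ) (ht : |t| ≤ Real.pi) : |t| ≤ Real.pi / 2 * ‖Complex.exp (Complex.I * t) - 1‖ := by
  rw [Complex.norm_exp_I_mul_ofReal_sub_one, Real.norm_eq_abs, abs_mul]
  have h := Real.mul_abs_le_abs_sin (x := t/2) (by rw [abs_div]; simp; linarith)
  have hp := Real.pi_pos
  rw [abs_div] at h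
  simp only [Nat.abs_ofNat] at h ⊢
  have := mul_le_mul_of_nonneg_left h hp.le
  have e : Real.pi * (2 / Real.pi * (|t| / 2)) = |t| := by field_simp
  rw [e] at this
  linarith

lemma padD_eval_ne (r : ℕ) (x : ℂ) (hx : x ≠ 1) : (padD r).eval x ≠ 0 := by
  have hne : padD r ≠ 0 := by
    intro h
    exact padD_coeff r (by rw [h]; simp)
  obtain ⟨q, hq, hqd⟩ := exists_eq_pow_rootMultiplicity_mul_and_not_dvd (padD r) hne 1
  set m := rootMultiplicity 1 (padD r) with hm
  have hq1 : q.eval 1 ≠ 0 := by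
    intro h
    exact hqd (dvd_iff_isRoot.mpr h)
  have hmge : 2 * r + 1 ≤ m := by
    by_contra hlt
    push Not at hlt
    have key : ∀ t : ℝ, 0 < t → t ≤ 1 → ‖q.eval (Complex.exp (Complex.I * t))‖ ≤ 2 ^ m * (2 * 4 ^ (r+1)) * t := by
      intro t h0 h1
      have hb := padD_bound r t h0.le h1
      rw [hq, eval_mul, eval_pow, eval_sub, eval_X, eval_C, norm_mul, norm_pow] at hb
      have hg := norm_exp_sub_ge t (by rw [abs_of_pos h0]; linarith [Real.pi_gt_three])
      rw [abs_of_pos h0] at hg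
      have hg2 : t / 2 ≤ ‖Complex.exp (Complex.I * t) - 1‖ := by
        have := norm_nonneg (Complex.exp (Complex.I * t) - 1)
        nlinarith [Real.pi_lt_four]
      have hg3 : (t / 2) ^ m ≤ ‖Complex.exp (Complex.I * t) - 1‖ ^ m := by gcongr
      have h5 : (t / 2) ^ m * ‖q.eval (Complex.exp (Complex.I * t))‖ ≤ 2 * 4 ^ (r+1) * t ^ (m + 1) := by
        refine (mul_le_mul_of_nonneg_right hg3 (norm_nonneg _)).trans (hb.trans ?_)
        have : t ^ (2 * r + 1) ≤ t ^ (m + 1) := pow_le_pow_of_le_one h0.le h1 (by omega)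
        gcongr
      have h6 : (t/2)^m * 2 ^ m = t ^ m := by rw [← mul_pow]; congr 1; ring
      have h7 : 0 < t ^ m := by positivity
      have h8 : t ^ m * ‖q.eval (Complex.exp (Complex.I * t))‖ ≤ t ^ m * (2 ^ m * (2 * 4 ^ (r+1)) * t) := by
        rw [← h6]
        have := mul_le_mul_of_nonneg_left h5 (show (0:ℝ) ≤ 2 ^ m by positivity)
        calc _ = 2 ^ m * ((t / 2) ^ m * ‖q.eval (Complex.exp (Complex.I * t))‖) := by ring
          _ ≤ _ := this
          _ = 2 ^ m * (2 * 4 ^ (r+1) * (t ^ m * t)) := by rw [pow_succ t m]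
          _ = _ := by rw [← h6]; ring
      exact le_of_mul_le_mul_left h8 h7
    have lim1 : Filter.Tendsto (fun t : ℝ => ‖q.eval (Complex.exp (Complex.I * t))‖) (nhdsWithin 0 (Set.Ioi 0))
        (nhds ‖q.eval 1‖) := by
      have : Continuous (fun t : ℝ => ‖q.eval (Complex.exp (Complex.I * t))‖) := by fun_prop
      have h := this.tendsto 0
      simp only [Complex.ofReal_zero, mul_zero, Complex.exp_zero] at h
      exact h.mono_left nhdsWithin_le_nhds
    have lim2 : Filter.Tendsto (fun t : ℝ => 2 ^ m * (2 * 4 ^ (r+1)) * t) (nhdsWithin 0 (Set.Ioi 0)) (nhds 0) := by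
      have : Continuous (fun t : ℝ => (2:ℝ) ^ m * (2 * 4 ^ (r+1)) * t) := by fun_prop
      have h := this.tendsto 0
      simp only [mul_zero] at h
      exact h.mono_left nhdsWithin_le_nhds
    have hle := le_of_tendsto_of_tendsto lim1 lim2 (by
      filter_upwards [Ioc_mem_nhdsGT (show (0:ℝ) < 1 by norm_num)] with t ht
      exact key t ht.1 ht.2)
    exact hq1 (norm_le_zero_iff.mp hle)
  have hqne : q ≠ 0 := by rintro rfl; simp at hq1
  have hdeg : q.natDegree = 0 := by
    have h1 := padD_natDegree r
    rw [hq, natDegree_mul (pow_ne_zero _ (X_sub_C_ne_zero 1)) hqne, natDegree_pow, natDegree_X_sub_C] at h1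
    omega
  rw [natDegree_eq_zero] at hdeg
  obtain ⟨c, rfl⟩ := hdeg
  rw [hq, eval_mul, eval_pow, eval_sub, eval_X, eval_C, eval_C]
  rw [eval_C] at hq1
  exact mul_ne_zero (pow_ne_zero _ (sub_ne_zero.mpr hx)) hq1

/-- The cube root of unity. -/
noncomputable def omg : ℂ := ⟨-1/2, Real.sqrt 3 / 2⟩

lemma omg_sq : omg ^ 2 = -1 - omg := by
  have h3 : Real.sqrt 3 * Real.sqrt 3 = 3 := Real.mul_self_sqrt (by norm_num)
  apply Complex.ext
  · simp [omg, pow_two]; linarith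
  · simp [omg, pow_two]; ring

lemma omg_conj : (starRingEnd ℂ) omg = -1 - omg := by
  apply Complex.ext
  · simp [omg]; norm_num
  · simp [omg]

lemma omg_im : omg.im = Real.sqrt 3 / 2 := rfl
lemma omg_re : omg.re = -1/2 := rfl

def eis : Subring ℂ where
  carrier := {z | ∃ x y : ℤ, z = x + y * omg}
  mul_mem' := by
    rintro _ _ ⟨a, b, rfl⟩ ⟨c, d, rfl⟩
    refine ⟨a * c - b * d, a * d + b * c - b * d, ?_⟩
    push_cast
    linear_combination (b * d : ℂ) * omg_sq
  one_mem' := ⟨1, 0, by simp⟩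
  add_mem' := by
    rintro _ _ ⟨a, b, rfl⟩ ⟨c, d, rfl⟩
    exact ⟨a + c, b + d, by push_cast; ring⟩
  zero_mem' := ⟨0, 0, by simp⟩
  neg_mem' := by
    rintro _ ⟨a, b, rfl⟩
    exact ⟨-a, -b, by push_cast; ring⟩

lemma eis_mem (x y : ℤ) : (x:ℂ) + y * omg ∈ eis := ⟨x, y, rfl⟩

lemma omg_mem : omg ∈ eis := ⟨0, 1, by simp⟩

lemma eis_conj (z : ℂ) (hz : z ∈ eis) : (starRingEnd ℂ) z ∈ eis := by
  obtain ⟨x, y, rfl⟩ := hz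
  refine ⟨x - y, -y, ?_⟩
  rw [map_add, map_mul, omg_conj]
  simp
  ring

lemma eis_normSq (x y : ℤ) : ‖(x:ℂ) + y * omg‖ ^ 2 = ((x ^ 2 - x * y + y ^ 2 : ℤ) : ℝ) := by
  have h3 : Real.sqrt 3 * Real.sqrt 3 = 3 := Real.mul_self_sqrt (by norm_num)
  rw [← Complex.normSq_eq_norm_sq, Complex.normSq_apply]
  simp [omg]
  ring_nf
  rw [Real.sq_sqrt (by norm_num)]
  ring

lemma eis_norm_ge (z : ℂ) (hz : z ∈ eis) (h0 : z ≠ 0) : 1 ≤ ‖z‖ := by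
  obtain ⟨x, y, rfl⟩ := hz
  have h := eis_normSq x y
  have hpos : 0 < ‖(x:ℂ) + y * omg‖ ^ 2 := by positivity
  rw [h] at hpos
  have : (1:ℤ) ≤ x ^ 2 - x * y + y ^ 2 := by
    have : (0:ℤ) < x ^ 2 - x * y + y ^ 2 := by exact_mod_cast hpos
    omega
  have h2 : (1:ℝ) ≤ ‖(x:ℂ) + y * omg‖ ^ 2 := by rw [h]; exact_mod_cast this
  nlinarith [norm_nonneg ((x:ℂ) + y * omg)]

/-- `√-3`. -/
noncomputable def srt : ℂ := 2 * omg + 1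

lemma srt_sq : srt ^ 2 = -3 := by
  unfold srt
  linear_combination 4 * omg_sq

lemma srt_mem : srt ∈ eis := ⟨1, 2, by unfold srt; push_cast; ring⟩

lemma srt_ne : srt ≠ 0 := by
  intro h
  have := srt_sq
  rw [h] at this
  norm_num at this

lemma srt_conj : (starRingEnd ℂ) srt = - srt := by
  unfold srt
  rw [map_add, map_mul, omg_conj, map_one, Complex.conj_ofNat]
  ring

lemma srt_norm : ‖srt‖ ^ 2 = 3 := by
  rw [← norm_pow, srt_sq]; simp

lemma padP_integral (a : ℤ) (r : ℕ) (β x : ℂ) (hβ : β ∈ eis) (hx : β * x = β - 3 * srt) :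
    β ^ r * (padP ((a:ℝ)/3) r).eval x ∈ eis := by
  rw [padP_zbasis, mul_sum]
  apply Subring.sum_mem
  intro k hk
  have hk' : k ≤ r := by have := mem_range.mp hk; omega
  obtain ⟨m, hm⟩ := choose_int (3 * r + a) k
  have hv := two_mul_v3_le k
  set v := padicValNat 3 k.factorial
  have hm' : (3:ℂ) ^ (k + v) * ((Ring.choose ((r:ℝ) + (a:ℝ)/3) k : ℝ) : ℂ) = m := by
    have e : (r:ℝ) + (a:ℝ)/3 = ((3 * r + a : ℤ) : ℝ) / 3 := by push_cast; ring
    rw [e]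
    exact_mod_cast congrArg (fun z : ℝ => (z:ℂ)) hm
  have h1 : β ^ k * (x - 1) ^ k = (3:ℂ) ^ (k + v) * ((-1) ^ (k + v) * srt ^ (k - 2 * v)) := by
    rw [← mul_pow, show β * (x - 1) = (-3) * srt by linear_combination hx, mul_pow]
    nth_rewrite 2 [show k = 2 * v + (k - 2 * v) by omega]
    rw [pow_add, pow_mul, srt_sq, ← mul_assoc, ← mul_assoc, ← pow_add, ← mul_pow]
    norm_num
  have h2 : β ^ r * (((Ring.choose ((r:ℝ) + (a:ℝ)/3) k : ℝ) : ℂ) * ((2 * r - k).choose (r - k) : ℂ) * (x - 1) ^ k)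
      = m * ((2 * r - k).choose (r - k) : ℕ) * (-1) ^ (k + v) * srt ^ (k - 2 * v) * β ^ (r - k) := by
    rw [← hm']
    nth_rewrite 1 [show r = (r - k) + k by omega]
    rw [pow_add]
    linear_combination (β ^ (r - k) * ((Ring.choose ((r:ℝ) + (a:ℝ)/3) k : ℝ) : ℂ) * ((2 * r - k).choose (r - k) : ℂ)) * h1
  rw [h2]
  refine eis.mul_mem (eis.mul_mem (eis.mul_mem (eis.mul_mem ?_ ?_) ?_) ?_) ?_
  · exact intCast_mem eis m
  · exact natCast_mem eis _
  · exact eis.pow_mem (eis.neg_mem eis.one_mem) _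
  · exact eis.pow_mem srt_mem _
  · exact eis.pow_mem hβ _

end Part4

section Part5

open Finset Polynomial

local notation "conj" => starRingEnd ℂ

lemma srt_norm' : ‖srt‖ = Real.sqrt 3 := by
  rw [eq_comm, Real.sqrt_eq_iff_eq_sq (by norm_num) (norm_nonneg _), srt_norm]

lemma srt_norm_lt : ‖srt‖ < 1.7321 := by
  have := srt_norm
  nlinarith [norm_nonneg srt]

lemma eis_inj (x y x' y' : ℤ) (h : (x:ℂ) + y * omg = x' + y' * omg) : x = x' ∧ y = y' := by
  have h2 := congrArg Complex.im h
  have h1 := congrArg Complex.re h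
  simp [omg] at h1 h2
  subst h2
  simp at h1
  exact ⟨h1, rfl⟩

lemma phi_exists (β : ℂ) (hβ : β - conj β = 3 * srt) (h0 : β ≠ 0) :
    ∃ φ : ℝ, Complex.exp (Complex.I * φ) * β = conj β ∧ |φ| ≤ 8.2 / ‖β‖ := by
  have hn : ‖conj β / β‖ = 1 := by
    rw [norm_div, RCLike.norm_conj]; exact div_self (norm_ne_zero_iff.mpr h0)
  have he : Complex.exp (Complex.I * (Complex.arg (conj β / β) : ℝ)) = conj β / β := by
    have := Complex.norm_mul_exp_arg_mul_I (conj β / β)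
    rw [hn] at this
    rw [mul_comm]; simpa using this
  refine ⟨Complex.arg (conj β / β), ?_, ?_⟩
  · rw [he]; field_simp
  · have h := norm_exp_sub_ge _ (Complex.abs_arg_le_pi (conj β / β))
    rw [he] at h
    have e : conj β / β - 1 = - (3 * srt) / β := by
      rw [← hβ]; field_simp; ring
    rw [e, norm_div, norm_neg, norm_mul] at h
    have hb : 0 < ‖β‖ := norm_pos_iff.mpr h0
    refine h.trans ?_
    rw [← mul_div_assoc]
    gcongr
    have := srt_norm_lt
    have := Real.pi_lt_d2
    have := Real.pi_pos
    simp
    nlinarith [norm_nonneg srt]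

lemma omg_cube : omg ^ 3 = 1 := by
  linear_combination (omg - 1) * omg_sq

lemma omg_norm : ‖omg‖ = 1 := by
  have h : ‖omg‖ ^ 3 = 1 := by rw [← norm_pow, omg_cube]; simp
  exact (pow_eq_one_iff_of_nonneg (norm_nonneg _) (by norm_num)).mp h

lemma cube_aux (p q r R : ℝ) (hp : 0 ≤ p) (hR : 0 < R) (h1 : p ≤ q) (h2 : p ≤ r) (h3 : Real.sqrt 3 * R ≤ p + q)
    (h4 : Real.sqrt 3 * R ≤ p + r) : p * (3/4 * R ^ 2) ≤ p * (q * r) := by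
  have hs : Real.sqrt 3 * Real.sqrt 3 = 3 := Real.mul_self_sqrt (by norm_num)
  have hs0 := Real.sqrt_nonneg 3
  have hq : Real.sqrt 3 / 2 * R ≤ q := by linarith
  have hr : Real.sqrt 3 / 2 * R ≤ r := by linarith
  have := mul_le_mul hq hr (by positivity) (by linarith)
  apply mul_le_mul_of_nonneg_left _ hp
  nlinarith

lemma cube_factor (u v : ℂ) (R : ℝ) (hR : 0 < R) (hu : ‖u‖ = R) :
    ∃ j : ℕ, ‖omg ^ j * u - v‖ * (3/4 * R ^ 2) ≤ ‖u ^ 3 - v ^ 3‖ := by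
  have hf : u ^ 3 - v ^ 3 = (u - v) * ((omg * u - v) * (omg ^ 2 * u - v)) := by
    linear_combination (-(omg - 1) * u ^ 3 + omg * u ^ 2 * v - u * v ^ 2) * omg_sq
  have hd : ∀ a b c: ℂ, ‖a - b‖ = Real.sqrt 3 * R → Real.sqrt 3 * R ≤ ‖a - c‖ + ‖b - c‖ := by
    intro a b c h
    rw [← h]
    calc _ = ‖(a - c) - (b - c)‖ := by congr 1; ring
      _ ≤ _ := norm_sub_le _ _
  have d1 : ‖u - omg * u‖ = Real.sqrt 3 * R := by
    rw [show u - omg * u = omg ^ 2 * srt * u by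
      unfold srt; linear_combination ((-2 * (omg - 1) - 1) * u) * omg_sq]
    rw [norm_mul, norm_mul, norm_pow, omg_norm, srt_norm', hu]; simp
  have d2 : ‖u - omg ^ 2 * u‖ = Real.sqrt 3 * R := by
    rw [show u - omg ^ 2 * u = - omg * srt * u by
      unfold srt; linear_combination u * omg_sq]
    rw [norm_mul, norm_mul, norm_neg, omg_norm, srt_norm', hu]; simp
  have d3 : ‖omg * u - omg ^ 2 * u‖ = Real.sqrt 3 * R := by
    rw [show omg * u - omg ^ 2 * u = srt * u by
      unfold srt; linear_combination (-u) * omg_sq]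
    rw [norm_mul, srt_norm', hu]
  rw [hf, norm_mul, norm_mul]
  have e1 := hd _ _ v d1
  have e2 := hd _ _ v d2
  have e3 := hd _ _ v d3
  set p := ‖u - v‖
  set q := ‖omg * u - v‖
  set r := ‖omg ^ 2 * u - v‖
  have hp : 0 ≤ p := norm_nonneg _
  have hq : 0 ≤ q := norm_nonneg _
  have hr : 0 ≤ r := norm_nonneg _
  by_cases h1 : p ≤ q ∧ p ≤ r
  · refine ⟨0, ?_⟩
    rw [pow_zero, one_mul]
    exact cube_aux p q r R hp hR h1.1 h1.2 e1 e2
  by_cases h2 : q ≤ p ∧ q ≤ r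
  · refine ⟨1, ?_⟩
    rw [pow_one]
    have := cube_aux q p r R hq hR h2.1 h2.2 (by linarith) e3
    calc _ ≤ _ := this
      _ = _ := by ring
  · refine ⟨2, ?_⟩
    have h3 : r ≤ p ∧ r ≤ q := by
      by_contra h
      rw [not_and_or] at h h1 h2
      push Not at h h1 h2
      rcases h with h | h <;> rcases h1 with h1 | h1 <;> rcases h2 with h2 | h2 <;> linarith
    have := cube_aux r p q R hr hR h3.1 h3.2 (by linarith) (by linarith)
    calc _ ≤ _ := this
      _ = _ := by ring

/-- the size window: if the auxiliary quantity is nonzero, we get a lower bound. -/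
lemma window (r : ℕ) (β ξ0 ξ : ℂ) (φ ρ R : ℝ) (hβ : β ∈ eis) (hξ0 : ξ0 ∈ eis) (hξ : ξ ∈ eis)
    (hb : β - conj β = 3 * srt) (hb0 : β ≠ 0)
    (hφ : Complex.exp (Complex.I * φ) * β = conj β) (hφ2 : |φ| ≤ 8.2 / ‖β‖)
    (hρ : ‖ξ0‖ = ρ) (hR0 : 0 < R) (hρ0 : 0 < ρ) (hR : ‖ξ‖ = ρ * R)
    (hc : ‖ξ * conj ξ0 - Complex.exp (Complex.I * ((φ/3 : ℝ) : ℂ)) * (conj ξ * ξ0)‖ ≤ 7 * ρ ^ 2 / (‖β‖ * R ^ 2))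
    (hne : (padP (1/3) r).eval (Complex.exp (Complex.I * φ)) * (conj ξ * ξ0) -
      (padP (-(1/3)) r).eval (Complex.exp (Complex.I * φ)) * (ξ * conj ξ0) ≠ 0) :
    1 ≤ 7 * ρ ^ 2 * (4 * ‖β‖) ^ r / (‖β‖ * R ^ 2) + 3 * ρ ^ 2 * R * 17 ^ r / ‖β‖ ^ (r + 1) := by
  set x := Complex.exp (Complex.I * φ)
  set τ := Complex.exp (Complex.I * ((φ/3 : ℝ) : ℂ))
  have hbx : β * x = β - 3 * srt := by rw [← hb]; linear_combination hφ
  have i1 := padP_integral 1 r β x hβ hbx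
  have i2 := padP_integral (-1) r β x hβ hbx
  rw [show (((1:ℤ):ℝ)/3) = 1/3 by norm_num] at i1
  rw [show (((-1:ℤ):ℝ)/3) = -(1/3) by norm_num] at i2
  set P := (padP (1/3) r).eval x with hP
  set Q := (padP (-(1/3)) r).eval x with hQ
  have hmem : β ^ r * (P * (conj ξ * ξ0) - Q * (ξ * conj ξ0)) ∈ eis := by
    have := eis.sub_mem (eis.mul_mem i1 (eis.mul_mem (eis_conj _ hξ) hξ0))
      (eis.mul_mem i2 (eis.mul_mem hξ (eis_conj _ hξ0)))
    convert this using 1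
    ring
  have h1 := eis_norm_ge _ hmem (mul_ne_zero (pow_ne_zero _ hb0) hne)
  have hB : 0 < ‖β‖ := norm_pos_iff.mpr hb0
  have hQn : ‖Q‖ ≤ 4 ^ r := padP_norm _ (by norm_num [abs_le]) r x (norm_expI φ)
  have he := pade_err r φ
  have hsplit : P * (conj ξ * ξ0) - Q * (ξ * conj ξ0) =
      (P - τ * Q) * (conj ξ * ξ0) - Q * (ξ * conj ξ0 - τ * (conj ξ * ξ0)) := by ring
  have h2 : ‖P * (conj ξ * ξ0) - Q * (ξ * conj ξ0)‖ ≤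
      |φ| ^ (2 * r + 1) / (3 * 4 ^ r) * (ρ ^ 2 * R) + 4 ^ r * (7 * ρ ^ 2 / (‖β‖ * R ^ 2)) := by
    rw [hsplit]
    refine (norm_sub_le _ _).trans (add_le_add ?_ ?_)
    · rw [norm_mul, norm_mul, RCLike.norm_conj, hR, hρ, show ρ * R * ρ = ρ ^ 2 * R by ring]
      gcongr
    · rw [norm_mul]
      gcongr
  rw [norm_mul, norm_pow] at h1
  refine h1.trans ((mul_le_mul_of_nonneg_left h2 (by positivity)).trans ?_)
  rw [mul_add, add_comm]
  refine add_le_add (le_of_eq ?_) ?_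
  · rw [mul_pow]; ring
  · have h3 : |φ| ^ (2 * r + 1) ≤ (8.2 / ‖β‖) ^ (2 * r + 1) := by gcongr
    have h4 : (8.2 / ‖β‖) ^ (2 * r + 1) = 8.2 * (67.24:ℝ) ^ r / (‖β‖ ^ r * ‖β‖ ^ (r + 1)) := by
      rw [div_pow, pow_succ, pow_mul, ← pow_add]
      norm_num
      rw [show r + (r + 1) = 2 * r + 1 by ring]
      ring
    have h5 : (67.24:ℝ) ^ r ≤ 17 ^ r * 4 ^ r := by
      rw [← mul_pow]; gcongr; norm_num
    calc ‖β‖ ^ r * (|φ| ^ (2 * r + 1) / (3 * 4 ^ r) * (ρ ^ 2 * R))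
        ≤ ‖β‖ ^ r * ((8.2 * (17 ^ r * 4 ^ r) / (‖β‖ ^ r * ‖β‖ ^ (r + 1))) / (3 * 4 ^ r) * (ρ ^ 2 * R)) := by
          refine mul_le_mul_of_nonneg_left ?_ (by positivity)
          refine mul_le_mul_of_nonneg_right ?_ (by positivity)
          refine div_le_div_of_nonneg_right ?_ (by positivity)
          rw [h4] at h3
          refine h3.trans ?_
          gcongr
      _ = 8.2 / 3 * (ρ ^ 2 * R * 17 ^ r / ‖β‖ ^ (r + 1)) := by field_simp
      _ ≤ 3 * (ρ ^ 2 * R * 17 ^ r / ‖β‖ ^ (r + 1)) := by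
          refine mul_le_mul_of_nonneg_right (by norm_num) (by positivity)
      _ = _ := by ring

end Part5

section Part6

open Finset Polynomial

local notation "conj" => starRingEnd ℂ

lemma padP_one (e : ℝ) (x : ℂ) : (padP e 1).eval x = ((1 - e : ℝ) : ℂ) + ((1 + e : ℝ) : ℂ) * x := by
  rw [padP_eval, sum_range_succ, sum_range_one]
  simp [padc]

lemma eis_real (z : ℂ) (hz : z ∈ eis) (hc : conj z = z) : ∃ n : ℤ, z = n := by
  obtain ⟨p, q, rfl⟩ := hz
  have h : ((p - q : ℤ) : ℂ) + ((-q : ℤ) : ℂ) * omg = p + q * omg := by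
    rw [← hc, map_add, map_mul, omg_conj]
    simp
    ring
  have := (eis_inj _ _ _ _ h).2
  have hq : q = 0 := by omega
  exact ⟨p, by rw [hq]; simp⟩

lemma delta_one (x0 y0 : ℤ) (hcop : IsCoprime x0 y0) (A ξ0 ξ β x : ℂ) (h0 : ξ0 = x0 + y0 * omg)
    (hβe : β ∈ eis)
    (hξ : ξ ∈ eis) (hξ0 : ξ0 ≠ 0) (hξn : ξ ≠ 0) (hβ : β = A * ξ0 ^ 3)
    (hb : β - conj β = 3 * srt)
    (hF : A * ξ ^ 3 - conj (A * ξ ^ 3) = 3 * srt) (hB : 40000 ≤ ‖β‖) (hx : x * β = conj β) :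
    (padP (1/3) 1).eval x * (conj ξ * ξ0) - (padP (-(1/3)) 1).eval x * (ξ * conj ξ0) ≠ 0 := by
  intro h
  rw [padP_one, padP_one] at h
  push_cast at h
  have hξ0e : ξ0 ∈ eis := h0 ▸ eis_mem x0 y0
  -- n = β + conj β
  obtain ⟨n, hn⟩ := eis_real (β + conj β) (eis.add_mem hβe (eis_conj _ hβe)) (by simp [add_comm])
  obtain ⟨M, hM⟩ := eis_real (ξ0 * conj ξ0) (eis.mul_mem hξ0e (eis_conj _ hξ0e)) (by simp [mul_comm])
  have h1 : ((n:ℂ) - srt) * (conj ξ * ξ0) = (n + srt) * (ξ * conj ξ0) := by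
    linear_combination (β) * h + (- (4/3) * (conj ξ * ξ0) + (2/3) * (ξ * conj ξ0)) * hx
      - (conj ξ * ξ0 - ξ * conj ξ0) * hn + (1/3) * (conj ξ * ξ0 + ξ * conj ξ0) * hb
  have hge : (n:ℂ) + srt ∈ eis := eis.add_mem (intCast_mem eis n) srt_mem
  obtain ⟨z, hz⟩ := eis_real ((n + srt) * (ξ * conj ξ0))
    (eis.mul_mem hge (eis.mul_mem hξ (eis_conj _ hξ0e)))
    (by rw [← h1]
        simp only [map_mul, Complex.conj_conj]
        rw [map_sub, map_intCast, srt_conj, sub_neg_eq_add, h1])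
  have hz' : ((n:ℂ) - srt) * (conj ξ * ξ0) = z := by rw [h1, hz]
  have hξc : conj ξ ≠ 0 := by simpa using hξn
  have hξ0c : conj ξ0 ≠ 0 := by simpa using hξ0
  -- N = n^2+3
  have hN1 : ((n:ℂ)^2+3) * M * ξ = z * ((n - srt) * ξ0) := by
    linear_combination (-((n:ℂ)^2+3) * ξ) * hM + ((n - srt) * ξ0) * hz + (ξ * conj ξ0 * ξ0) * srt_sq
  have hN2 : ((n:ℂ)^2+3) * M * conj ξ = z * ((n + srt) * conj ξ0) := by
    linear_combination (-((n:ℂ)^2+3) * conj ξ) * hM + ((n + srt) * conj ξ0) * hz' + (conj ξ * conj ξ0 * ξ0) * srt_sq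
  have hcb : conj β = conj A * conj ξ0 ^ 3 := by rw [hβ]; simp
  have hF' : A * ξ ^ 3 - conj A * conj ξ ^ 3 = 3 * srt := by rw [← hF]; simp
  have hb2 : 2 * β = n + 3 * srt := by linear_combination hb + hn
  have hb3 : 2 * conj β = n - 3 * srt := by linear_combination hn - hb
  have key : (((n:ℂ)^2+3) * M) ^ 3 = n * (-2 * z) ^ 3 := by
    have c1 : (((n:ℂ)^2+3) * M) ^ 3 * (A * ξ ^ 3) = z ^ 3 * (n - srt) ^ 3 * β := by
      rw [hβ]
      calc _ = A * (((n:ℂ)^2+3) * M * ξ) ^ 3 := by ring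
        _ = _ := by rw [hN1]; ring
    have c2 : (((n:ℂ)^2+3) * M) ^ 3 * (conj A * conj ξ ^ 3) = z ^ 3 * (n + srt) ^ 3 * conj β := by
      rw [hcb]
      calc _ = conj A * (((n:ℂ)^2+3) * M * conj ξ) ^ 3 := by ring
        _ = _ := by rw [hN2]; ring
    have c3 : (((n:ℂ)^2+3) * M) ^ 3 * (3 * srt) = (n * (-2 * z) ^ 3) * (3 * srt) := by
      linear_combination (-(((n:ℂ)^2+3) * M) ^ 3) * hF' + c1 - c2 + (z ^ 3 * (n - srt) ^ 3 / 2) * hb2 - (z ^ 3 * (n + srt) ^ 3 / 2) * hb3 + (8 * z^3*n*srt) * srt_sq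
    exact mul_right_cancel₀ (mul_ne_zero (by norm_num) srt_ne) c3
  have keyZ : ((n^2+3) * M) ^ 3 = n * (-2 * z) ^ 3 := by exact_mod_cast key
  have hdvd : -2 * z ∣ (n^2+3) * M := by
    rw [← Int.pow_dvd_pow_iff (n := 3) (by norm_num), keyZ]
    exact Dvd.intro_left _ rfl
  obtain ⟨c, hc⟩ := hdvd
  have hM0 : (M:ℂ) ≠ 0 := by rw [← hM]; exact mul_ne_zero hξ0 hξ0c
  have hM0' : M ≠ 0 := by exact_mod_cast hM0
  have hz0 : z ≠ 0 := by
    rintro rfl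
    simp at hc
    rcases hc with hc | hc
    · nlinarith [sq_nonneg n]
    · exact hM0' hc
  have hnc : n = c ^ 3 := by
    rw [hc] at keyZ
    have : (-2 * z) ^ 3 ≠ 0 := pow_ne_zero _ (by omega)
    apply mul_right_cancel₀ this
    rw [← keyZ]; ring
  have hzC : (z:ℂ) ≠ 0 := by exact_mod_cast hz0
  have hcC : ((n:ℂ)^2+3) * M = -2 * z * c := by exact_mod_cast hc
  have h2 : (n - srt) * ξ0 = -2 * c * ξ := by
    apply mul_left_cancel₀ hzC
    rw [← hN1, hcC]; ring
  have h3 : (c:ℂ) * (-2 * ((n + srt) * ξ) - c ^ 5 * ξ0) = 3 * ξ0 := by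
    have hnC : (n:ℂ) = c ^ 3 := by exact_mod_cast hnc
    have : (n + srt) * ((n - srt) * ξ0) = (n + srt) * (-2 * c * ξ) := by rw [h2]
    have e : ((n:ℂ)^2+3) * ξ0 = (n + srt) * (-2 * c * ξ) := by
      linear_combination this + ξ0 * srt_sq
    have e2 : (n:ℂ) ^ 2 = c ^ 6 := by rw [hnC]; ring
    linear_combination -e + ξ0 * e2
  have hw : -2 * ((n + srt) * ξ) - (c:ℂ) ^ 5 * ξ0 ∈ eis :=
    eis.sub_mem (eis.mul_mem (by exact_mod_cast intCast_mem eis (-2)) (eis.mul_mem hge hξ))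
      (eis.mul_mem (eis.pow_mem (intCast_mem eis c) _) hξ0e)
  obtain ⟨p, q, hpq⟩ := hw
  rw [hpq, h0] at h3
  have h4 := eis_inj (c * p) (c * q) (3 * x0) (3 * y0) (by push_cast; linear_combination h3)
  obtain ⟨u, v, huv⟩ := hcop
  have hc3 : c ∣ 3 := ⟨u * p + v * q, by linear_combination (-3) * huv - u * h4.1 - v * h4.2⟩
  have hcle : |c| ≤ 3 := Int.le_of_dvd (by norm_num) ((abs_dvd c 3).mpr hc3)
  -- size
  have h5 : (2 * ‖β‖) ≤ |(n:ℝ)| + 3 * ‖srt‖ := by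
    have := congrArg norm hb2
    rw [norm_mul] at this
    simp at this
    rw [this]
    refine (norm_add_le _ _).trans (le_of_eq ?_)
    rw [norm_mul]; simp
  have h6 := srt_norm_lt
  have h7 : |(n:ℝ)| ≤ 27 := by
    rw [hnc]; push_cast; rw [abs_pow]
    have : (|(c:ℝ)|) ≤ 3 := by exact_mod_cast hcle
    calc |(c:ℝ)| ^ 3 ≤ 3 ^ 3 := by gcongr
      _ = 27 := by norm_num
  linarith

end Part6

section Part7

open Finset Polynomial

local notation "conj" => starRingEnd ℂ

lemma padP_zero (e : ℝ) (x : ℂ) : (padP e 0).eval x = 1 := by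
  rw [padP_eval, sum_range_one]
  simp [padc]

lemma window_false (r : ℕ) (B ρ R : ℝ) (hB : 0 < B) (hR : 0 < R)
    (h : 1 ≤ 7 * ρ ^ 2 * (4 * B) ^ r / (B * R ^ 2) + 3 * ρ ^ 2 * R * 17 ^ r / B ^ (r + 1))
    (h1 : 14 * ρ ^ 2 * (4 * B) ^ r < B * R ^ 2) (h2 : 6 * ρ ^ 2 * R * 17 ^ r < B ^ (r + 1)) : False := by
  have a1 : 7 * ρ ^ 2 * (4 * B) ^ r / (B * R ^ 2) < 1 / 2 := by
    rw [div_lt_iff₀ (by positivity)]; linarith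
  have a2 : 3 * ρ ^ 2 * R * 17 ^ r / B ^ (r + 1) < 1 / 2 := by
    rw [div_lt_iff₀ (by positivity)]; linarith
  linarith

lemma win_arith (k : ℕ) (B ρ R : ℝ) (hρ : 1 ≤ ρ) (hR : 1 ≤ R) (hB : 40000 * ρ ^ 3 ≤ B)
    (h : B ^ (k + 2) ≤ 6 * ρ ^ 2 * R * 17 ^ (k + 1)) :
    14 * ρ ^ 2 * (4 * B) ^ (k + 3) < B * R ^ 2 := by
  have hρ3 : (1:ℝ) ≤ ρ ^ 3 := one_le_pow₀ hρ
  have hB0 : 40000 ≤ B := by linarith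
  have hBp : 0 < B := by linarith
  have h1 : B ^ (2 * k + 4) ≤ 36 * ρ ^ 4 * R ^ 2 * 289 ^ (k + 1) := by
    calc B ^ (2 * k + 4) = (B ^ (k + 2)) ^ 2 := by rw [← pow_mul]; ring_nf
      _ ≤ (6 * ρ ^ 2 * R * 17 ^ (k + 1)) ^ 2 := by gcongr
      _ = 36 * ρ ^ 4 * R ^ 2 * (17 ^ 2) ^ (k + 1) := by rw [← pow_mul]; ring
      _ = _ := by norm_num
  have h2 : 8064 * ρ ^ 6 * 1156 ^ (k + 1) < B ^ (k + 2) := by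
    have e1 : (1156:ℝ) ^ k ≤ B ^ k := by gcongr; linarith
    have e2 : 1600000000 * ρ ^ 6 ≤ B ^ 2 := by
      calc 1600000000 * ρ ^ 6 = (40000 * ρ ^ 3) ^ 2 := by ring
        _ ≤ _ := by gcongr
    have e3 : 0 < ρ ^ 6 := by positivity
    calc 8064 * ρ ^ 6 * 1156 ^ (k + 1) = 1156 ^ k * (8064 * 1156 * ρ ^ 6) := by ring
      _ < 1156 ^ k * (1600000000 * ρ ^ 6) := by
        apply mul_lt_mul_of_pos_left _ (by positivity)
        linarith
      _ ≤ B ^ k * B ^ 2 := by gcongr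
      _ = _ := by ring
  have hp : (0:ℝ) < 36 * ρ ^ 4 * 289 ^ (k + 1) := by positivity
  have h3 : (14 * ρ ^ 2 * (4 * B) ^ (k + 3)) * (36 * ρ ^ 4 * 289 ^ (k + 1)) <
      (B * R ^ 2) * (36 * ρ ^ 4 * 289 ^ (k + 1)) := by
    calc (14 * ρ ^ 2 * (4 * B) ^ (k + 3)) * (36 * ρ ^ 4 * 289 ^ (k + 1))
        = B ^ (k + 3) * (8064 * ρ ^ 6 * (4 * 289) ^ (k + 1)) := by rw [mul_pow, mul_pow]; ring
      _ < B ^ (k + 3) * B ^ (k + 2) := by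
        apply mul_lt_mul_of_pos_left _ (by positivity)
        norm_num
        exact h2
      _ = B * B ^ (2 * k + 4) := by ring
      _ ≤ B * (36 * ρ ^ 4 * R ^ 2 * 289 ^ (k + 1)) := by gcongr
      _ = _ := by ring
  exact lt_of_mul_lt_mul_right h3 hp.le

lemma core (A ξ0 ξ : ℂ) (x0 y0 : ℤ) (hcop : IsCoprime x0 y0) (h0 : ξ0 = x0 + y0 * omg) (hA : A ∈ eis)
    (hAn : 40000 ≤ ‖A‖) (hξ' : ξ ∈ eis) (hF0 : A * ξ0 ^ 3 - conj (A * ξ0 ^ 3) = 3 * srt)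
    (hF' : A * ξ ^ 3 - conj (A * ξ ^ 3) = 3 * srt) (hle : ‖ξ0‖ ≤ ‖ξ‖) : ∃ j : ℕ, omg ^ j * ξ = ξ0 := by
  have hξ0e : ξ0 ∈ eis := h0 ▸ eis_mem x0 y0
  have hs3 : 3 * srt ≠ 0 := mul_ne_zero (by norm_num) srt_ne
  have hξ0 : ξ0 ≠ 0 := by
    rintro h; rw [h] at hF0; simp at hF0; exact srt_ne hF0
  have hξn' : ξ ≠ 0 := by
    rintro h; rw [h] at hF'; simp at hF'; exact srt_ne hF'
  have hA0 : A ≠ 0 := by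
    rintro h; rw [h] at hAn; norm_num at hAn
  obtain ⟨β, hβ⟩ : ∃ β, β = A * ξ0 ^ 3 := ⟨_, rfl⟩
  have hβe : β ∈ eis := by rw [hβ]; exact eis.mul_mem hA (eis.pow_mem hξ0e 3)
  have hβ0 : β ≠ 0 := by rw [hβ]; exact mul_ne_zero hA0 (pow_ne_zero _ hξ0)
  rw [← hβ] at hF0
  obtain ⟨φ, hφ1, hφ2⟩ := phi_exists β hF0 hβ0
  obtain ⟨ρ, hρ⟩ : ∃ ρ, ‖ξ0‖ = ρ := ⟨_, rfl⟩
  have hρ1 : 1 ≤ ρ := by rw [← hρ]; exact eis_norm_ge _ hξ0e hξ0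
  have hρp : 0 < ρ := by linarith
  obtain ⟨R, hRd⟩ : ∃ R, R = ‖ξ‖ / ρ := ⟨_, rfl⟩
  have hR1 : 1 ≤ R := by rw [hRd, le_div_iff₀ hρp]; linarith
  have hRp : 0 < R := by linarith
  have hR : ‖ξ‖ = ρ * R := by rw [hRd]; field_simp
  have hBn : ‖β‖ = ‖A‖ * ρ ^ 3 := by rw [hβ, norm_mul, norm_pow, hρ]
  obtain ⟨B, hBd⟩ : ∃ B, ‖β‖ = B := ⟨_, rfl⟩
  have hρ3 : (1:ℝ) ≤ ρ ^ 3 := one_le_pow₀ hρ1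
  have hB : 40000 * ρ ^ 3 ≤ B := by rw [← hBd, hBn]; gcongr
  have hB4 : 40000 ≤ B := by linarith
  have hBp : 0 < B := by linarith
  -- close cube root
  set τ := Complex.exp (Complex.I * ((φ/3 : ℝ) : ℂ)) with hτ
  set x := Complex.exp (Complex.I * φ) with hx
  have hτ3 : τ ^ 3 = x := by
    rw [hτ, hx, ← Complex.exp_nat_mul]
    congr 1
    push_cast
    ring
  have hu : ‖ξ * conj ξ0‖ = ρ ^ 2 * R := by rw [norm_mul, RCLike.norm_conj, hR, hρ]; ring
  obtain ⟨j, hj⟩ := cube_factor (ξ * conj ξ0) (τ * (conj ξ * ξ0)) (ρ ^ 2 * R) (by positivity) hu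
  have hcube : ‖(ξ * conj ξ0) ^ 3 - (τ * (conj ξ * ξ0)) ^ 3‖ = 3 * ‖srt‖ * ρ ^ 6 / B := by
    have e : β * ((ξ * conj ξ0) ^ 3 - (τ * (conj ξ * ξ0)) ^ 3) = 3 * srt * (ξ0 ^ 3 * conj ξ0 ^ 3) := by
      have e1 : conj β = conj A * conj ξ0 ^ 3 := by rw [hβ]; simp
      have e2 : A * ξ ^ 3 - conj A * conj ξ ^ 3 = 3 * srt := by rw [← hF']; simp
      have e3 : (τ * (conj ξ * ξ0)) ^ 3 = x * (conj ξ * ξ0) ^ 3 := by rw [mul_pow, hτ3]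
      rw [e3, mul_sub, ← mul_assoc β x, mul_comm β x, hφ1, e1, hβ, ← e2]
      ring
    have e' := congrArg norm e
    simp only [norm_mul, norm_pow, RCLike.norm_conj, hBd, hρ] at e'
    rw [eq_div_iff hBp.ne', mul_comm, e', Complex.norm_ofNat]
    ring
  have hclose : ‖omg ^ j * (ξ * conj ξ0) - τ * (conj ξ * ξ0)‖ ≤ 7 * ρ ^ 2 / (B * R ^ 2) := by
    rw [hcube] at hj
    rw [le_div_iff₀ (by positivity)]
    have e1 : ‖omg ^ j * (ξ * conj ξ0) - τ * (conj ξ * ξ0)‖ * (3/4 * (ρ ^ 2 * R) ^ 2) * B ≤ 3 * ‖srt‖ * ρ ^ 6 := by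
      calc _ ≤ 3 * ‖srt‖ * ρ ^ 6 / B * B := by gcongr
        _ = _ := by field_simp
    have e2 := srt_norm_lt
    have e3 : 0 < ρ ^ 4 := by positivity
    refine le_of_mul_le_mul_right (a := 3/4 * ρ ^ 4) ?_ (by positivity)
    calc _ = ‖omg ^ j * (ξ * conj ξ0) - τ * (conj ξ * ξ0)‖ * (3/4 * (ρ ^ 2 * R) ^ 2) * B := by ring
      _ ≤ _ := e1
      _ ≤ 3 * 1.75 * ρ ^ 6 := by gcongr; linarith
      _ = _ := by ring
  refine ⟨2 * j, ?_⟩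
  obtain ⟨ζ, hζ⟩ : ∃ ζ, ζ = omg ^ (2 * j) * ξ := ⟨_, rfl⟩
  rw [← hζ]
  have hζe : ζ ∈ eis := by rw [hζ]; exact eis.mul_mem (eis.pow_mem omg_mem _) hξ'
  have hζ3 : ζ ^ 3 = ξ ^ 3 := by
    rw [hζ, mul_pow, ← pow_mul, mul_comm (2 * j) 3, pow_mul, omg_cube]; simp
  have hcζ : conj ζ = omg ^ j * conj ξ := by
    rw [hζ, map_mul, map_pow, omg_conj, ← omg_sq, ← pow_mul, show 2 * (2 * j) = 3 * j + j by ring, pow_add,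
      pow_mul, omg_cube]
    simp
  have hF : A * ζ ^ 3 - conj (A * ζ ^ 3) = 3 * srt := by rw [hζ3]; exact hF'
  have hζn : ‖ζ‖ = ρ * R := by rw [hζ, norm_mul, norm_pow, omg_norm, hR]; simp
  have hζ0 : ζ ≠ 0 := by
    rw [hζ]; refine mul_ne_zero (pow_ne_zero _ ?_) hξn'
    intro h; have := omg_cube; rw [h] at this; norm_num at this
  have hc : ‖ζ * conj ξ0 - τ * (conj ζ * ξ0)‖ ≤ 7 * ρ ^ 2 / (‖β‖ * R ^ 2) := by
    rw [hBd]
    refine le_trans (le_of_eq ?_) hclose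
    rw [hcζ, hζ, show omg ^ (2 * j) * ξ * conj ξ0 - τ * (omg ^ j * conj ξ * ξ0) =
      omg ^ j * (omg ^ j * (ξ * conj ξ0) - τ * (conj ξ * ξ0)) by rw [two_mul, pow_add]; ring,
      norm_mul, norm_pow, omg_norm]
    simp
  clear_value x τ
  by_cases hprop : ζ * conj ξ0 = conj ζ * ξ0
  · -- proportional
    have hzr : conj (ζ * conj ξ0) = ζ * conj ξ0 := by rw [map_mul, Complex.conj_conj, ← hprop]
    obtain ⟨z, hz⟩ := Complex.conj_eq_iff_real.mp hzr
    obtain ⟨m, hm⟩ : ∃ m : ℝ, ξ0 * conj ξ0 = m := ⟨_, Complex.mul_conj ξ0⟩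
    have e1 : conj β = conj A * conj ξ0 ^ 3 := by rw [hβ]; simp
    have e2 : A * ζ ^ 3 - conj A * conj ζ ^ 3 = 3 * srt := by rw [← hF]; simp
    have e3 : (z:ℂ) ^ 3 * (3 * srt) = (m:ℂ) ^ 3 * (3 * srt) := by
      calc (z:ℂ) ^ 3 * (3 * srt) = β * (z:ℂ) ^ 3 - conj β * (z:ℂ) ^ 3 := by rw [← hF0]; ring
        _ = β * (ζ * conj ξ0) ^ 3 - conj β * (conj ζ * ξ0) ^ 3 := by rw [← hprop, hz]
        _ = (ξ0 * conj ξ0) ^ 3 * (A * ζ ^ 3 - conj A * conj ζ ^ 3) := by rw [e1, hβ]; ring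
        _ = _ := by rw [e2, hm]
    have e4 := mul_right_cancel₀ hs3 e3
    have e5 : z ^ 3 = m ^ 3 := by exact_mod_cast e4
    have e6 : z = m := (Odd.strictMono_pow (by decide : Odd 3)).injective e5
    have : ζ * conj ξ0 = ξ0 * conj ξ0 := by rw [hz, hm, e6]
    exact mul_right_cancel₀ (by simpa using hξ0) this
  exfalso
  have hx1 : x ≠ 1 := by
    rintro h
    rw [h, one_mul] at hφ1
    rw [← hφ1] at hF0
    simp at hF0
    exact srt_ne hF0
  have W : ∀ r : ℕ, 14 * ρ ^ 2 * (4 * B) ^ r < B * R ^ 2 → 6 * ρ ^ 2 * R * 17 ^ r < B ^ (r + 1) →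
      (padP (1/3) r).eval x * (conj ζ * ξ0) - (padP (-(1/3)) r).eval x * (ζ * conj ξ0) = 0 := by
    intro r h1 h2
    by_contra hne
    have := window r β ξ0 ζ φ ρ R hβe hξ0e hζe hF0 hβ0 (hx ▸ hφ1) hφ2 hρ hRp hρp hζn (hτ ▸ hc) (hx ▸ hne)
    rw [hBd] at this
    exact window_false r B ρ R hBp hRp this h1 h2
  have hex : ∃ r : ℕ, 6 * ρ ^ 2 * R * 17 ^ r < B ^ (r + 1) := by
    obtain ⟨n, hn⟩ := pow_unbounded_of_one_lt (6 * ρ ^ 2 * R) (show (1:ℝ) < B / 17 by rw [lt_div_iff₀] <;> linarith)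
    refine ⟨n, ?_⟩
    rw [div_pow, lt_div_iff₀ (by positivity)] at hn
    refine hn.trans_le ?_
    exact pow_le_pow_right₀ (by linarith) (by omega)
  classical
  have hG := Nat.find_spec hex
  have hmin := fun m => Nat.find_min hex (m := m)
  set r := Nat.find hex
  clear_value r
  have hR2 : (1:ℝ) ≤ R ^ 2 := one_le_pow₀ hR1
  have hρ2 : ρ ^ 2 ≤ ρ ^ 3 := pow_le_pow_right₀ hρ1 (by omega)
  rcases r with _ | _ | k
  · have := W 0 (by
      have : B * 1 ≤ B * R ^ 2 := by gcongr
      simp only [pow_zero, mul_one]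
      nlinarith) hG
    rw [padP_zero, padP_zero, one_mul, one_mul, sub_eq_zero] at this
    exact hprop this.symm
  · have h1 := hmin 0 (by omega)
    simp only [pow_zero, mul_one, zero_add, pow_one, not_lt] at h1
    refine delta_one x0 y0 hcop A ξ0 ζ β x h0 hβe hζe hξ0 hζ0 hβ hF0 hF (by rw [hBd]; exact hB4) hφ1 (W 1 ?_ hG)
    have h2 : 6000 * ρ ≤ R := by
      have : (6000 * ρ) * (6 * ρ ^ 2) ≤ R * (6 * ρ ^ 2) := by nlinarith
      exact le_of_mul_le_mul_right this (by positivity)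
    have h3 : (6000 * ρ) ^ 2 ≤ R ^ 2 := by gcongr
    rw [pow_one]
    nlinarith
  · have h1 := hmin (k + 1) (by omega)
    rw [not_lt] at h1
    have w2 := win_arith k B ρ R hρ1 hR1 hB h1
    have w1 : 14 * ρ ^ 2 * (4 * B) ^ (k + 2) < B * R ^ 2 := by
      refine lt_of_le_of_lt ?_ w2
      have : (4 * B) ^ (k + 2) ≤ (4 * B) ^ (k + 3) := pow_le_pow_right₀ (by linarith) (by omega)
      gcongr
    have d1 := W (k + 2) w1 hG
    have d2 := W (k + 3) w2 (by
      calc 6 * ρ ^ 2 * R * 17 ^ (k + 3) = 17 * (6 * ρ ^ 2 * R * 17 ^ (k + 2)) := by ring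
        _ < 17 * B ^ (k + 2 + 1) := by gcongr
        _ ≤ B * B ^ (k + 2 + 1) := by gcongr; linarith
        _ = _ := by ring)
    have hD : (padD (k + 2)).eval x * (conj ζ * ξ0) = 0 := by
      unfold padD
      rw [eval_sub, eval_mul, eval_mul]
      linear_combination (padP (-(1/3)) (k + 3)).eval x * d1 - (padP (-(1/3)) (k + 2)).eval x * d2
    rcases mul_eq_zero.mp hD with h | h
    · exact padD_eval_ne _ x hx1 h
    · exact mul_ne_zero (by simpa using hζ0) hξ0 h

end Part7

section Part8

lemma std_id (a b x y : ℤ) :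
    (((3 * a + b : ℤ) : ℂ) + ((3 * a : ℤ) : ℂ) * omg) * ((x:ℂ) + y * omg) ^ 3 -
      (starRingEnd ℂ) ((((3 * a + b : ℤ) : ℂ) + ((3 * a : ℤ) : ℂ) * omg) * ((x:ℂ) + y * omg) ^ 3) =
    3 * srt * (cubicForm a b (-(b + 3 * a)) a x y : ℤ) := by
  rw [map_mul, map_pow, map_add, map_mul, map_add, map_mul, omg_conj]
  simp only [map_intCast]
  unfold srt cubicForm
  push_cast
  have h3 : omg ^ 3 = 1 := omg_cube
  have h2 := omg_sq
  ring_nf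
  rw [h3, h2]
  ring

lemma std_le (a b x0 y0 x y : ℤ) (hD : 2560000000000000000 ≤ cubicDisc a b (-(b + 3 * a)) a)
    (h0 : cubicForm a b (-(b + 3 * a)) a x0 y0 = 1) (h1 : cubicForm a b (-(b + 3 * a)) a x y = 1)
    (hle : ‖(x0:ℂ) + y0 * omg‖ ≤ ‖(x:ℂ) + y * omg‖) :
    (x0 = x ∧ y0 = y) ∨ (x0 = -y ∧ y0 = x - y) ∨ (x0 = y - x ∧ y0 = -x) := by
  have i0 := std_id a b x0 y0
  have i1 := std_id a b x y
  rw [h0] at i0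
  rw [h1] at i1
  have hcop : IsCoprime x0 y0 := by
    refine ⟨a * x0 ^ 2 + b * x0 * y0 + -(b + 3 * a) * y0 ^ 2, a * y0 ^ 2, ?_⟩
    rw [← h0]; unfold cubicForm; ring
  have hA : 40000 ≤ ‖((3 * a + b : ℤ) : ℂ) + ((3 * a : ℤ) : ℂ) * omg‖ := by
    have e := eis_normSq (3 * a + b) (3 * a)
    have e1 : cubicDisc a b (-(b + 3 * a)) a = ((3 * a + b) ^ 2 - (3 * a + b) * (3 * a) + (3 * a) ^ 2) ^ 2 := by
      unfold cubicDisc; ring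
    rw [e1] at hD
    have e2 : (0:ℤ) ≤ (3 * a + b) ^ 2 - (3 * a + b) * (3 * a) + (3 * a) ^ 2 := by
      nlinarith [sq_nonneg ((3 * a + b) - 3 * a), sq_nonneg (3 * a + b), sq_nonneg (3 * a)]
    have e3 : (1600000000:ℤ) ≤ (3 * a + b) ^ 2 - (3 * a + b) * (3 * a) + (3 * a) ^ 2 := by nlinarith
    have e4 : (1600000000:ℝ) ≤ ‖((3 * a + b : ℤ) : ℂ) + ((3 * a : ℤ) : ℂ) * omg‖ ^ 2 := by
      rw [e]; exact_mod_cast e3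
    nlinarith [norm_nonneg (((3 * a + b : ℤ) : ℂ) + ((3 * a : ℤ) : ℂ) * omg)]
  obtain ⟨j, hj⟩ := core _ _ _ x0 y0 hcop rfl (eis_mem (3 * a + b) (3 * a)) hA (eis_mem x y)
    (by simpa using i0) (by simpa using i1) hle
  have hj2 : omg ^ (j % 3) * ((x:ℂ) + y * omg) = x0 + y0 * omg := by
    rw [← hj]
    nth_rewrite 2 [← Nat.mod_add_div j 3]
    rw [pow_add, pow_mul, omg_cube]; simp
  have h3 : j % 3 < 3 := Nat.mod_lt _ (by norm_num)
  interval_cases j % 3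
  · left
    refine eis_inj _ _ _ _ ?_
    rw [← hj2]; ring
  · right; left
    refine eis_inj _ _ _ _ ?_
    rw [← hj2]; push_cast
    linear_combination (y:ℂ) * omg_sq
  · right; right
    refine eis_inj _ _ _ _ ?_
    rw [← hj2]; push_cast
    linear_combination (x:ℂ) * omg_sq + (y:ℂ) * omg_cube

lemma std (a b x0 y0 x y : ℤ) (hD : 2560000000000000000 ≤ cubicDisc a b (-(b + 3 * a)) a)
    (h0 : cubicForm a b (-(b + 3 * a)) a x0 y0 = 1) (h1 : cubicForm a b (-(b + 3 * a)) a x y = 1) :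
    (x = x0 ∧ y = y0) ∨ (x = -y0 ∧ y = x0 - y0) ∨ (x = y0 - x0 ∧ y = -x0) := by
  rcases le_total ‖(x0:ℂ) + y0 * omg‖ ‖(x:ℂ) + y * omg‖ with h | h
  · have := std_le a b x0 y0 x y hD h0 h1 h
    omega
  · have := std_le a b x y x0 y0 hD h1 h0 h
    omega

/-- Forms of discriminant `-3` represent `±1`. -/
lemma rep_one (n : ℕ) : ∀ α β γ : ℤ, α.natAbs ≤ n → β ^ 2 - 4 * α * γ = -3 →
    ∃ x y : ℤ, (α * x ^ 2 + β * x * y + γ * y ^ 2) ^ 2 = 1 := by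
  induction n with
  | zero =>
    intro α β γ h hd
    have : α = 0 := by omega
    subst this
    nlinarith [sq_nonneg β]
  | succ n ih =>
    intro α β γ h hd
    by_cases h1 : α ^ 2 = 1
    · exact ⟨1, 0, by linear_combination h1⟩
    have hα0 : α ≠ 0 := by
      rintro rfl
      nlinarith [sq_nonneg β]
    have hα2 : 4 ≤ α ^ 2 := by
      have h2 : 2 ≤ |α| := by
        have : 0 < |α| := abs_pos.mpr hα0
        have : |α| ≠ 1 := by
          intro h; apply h1; rw [← sq_abs, h]; norm_num
        omega
      rw [← sq_abs]; nlinarith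
    -- translate
    obtain ⟨k, hk⟩ : ∃ k : ℤ, |β + 2 * α * k| ≤ |α| := by
      refine ⟨-((β + |α|) / (2 * |α|)) * α.sign, ?_⟩
      have hp : 0 < |α| := abs_pos.mpr hα0
      have e1 := Int.emod_add_mul_ediv (β + |α|) (2 * |α|)
      have e2 := Int.emod_nonneg (β + |α|) (show 2 * |α| ≠ 0 by omega)
      have e3 := Int.emod_lt_of_pos (β + |α|) (show 0 < 2 * |α| by omega)
      have e4 : α * α.sign = |α| := by rw [mul_comm, Int.sign_mul_self_eq_abs]
      have e5 : β + 2 * α * (-((β + |α|) / (2 * |α|)) * α.sign) = (β + |α|) % (2 * |α|) - |α| := by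
        linear_combination (-2 * ((β + |α|) / (2 * |α|))) * e4 - e1
      rw [e5, abs_le]
      constructor <;> linarith
    set β' := β + 2 * α * k with hβ'
    set γ' := α * k ^ 2 + β * k + γ with hγ'
    have hd' : β' ^ 2 - 4 * γ' * α = -3 := by rw [← hd, hβ', hγ']; ring
    have hb : β' ^ 2 ≤ α ^ 2 := sq_le_sq.mpr hk
    have hg : γ'.natAbs ≤ n := by
      have h3 : |γ'| < |α| := by
        have : 4 * (|γ'| * |α|) ≤ α ^ 2 + 3 := by
          rw [← abs_mul]
          have : γ' * α ≥ 0 := by nlinarith [sq_nonneg β']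
          rw [abs_of_nonneg this]; linarith
        rw [← sq_abs α] at this hα2
        have hp : 0 < |α| := abs_pos.mpr hα0
        by_contra hc
        push Not at hc
        nlinarith
      rw [Int.abs_eq_natAbs, Int.abs_eq_natAbs] at h3
      omega
    obtain ⟨x, y, hxy⟩ := ih γ' β' α hg hd'
    refine ⟨y + k * x, x, ?_⟩
    rw [← hxy, hβ', hγ']
    ring

lemma no_zero (a b c d : ℤ) (hirr : Irreducible
      (MvPolynomial.C (a : ℚ) * MvPolynomial.X 0 ^ 3 +
        MvPolynomial.C (b : ℚ) * MvPolynomial.X 0 ^ 2 * MvPolynomial.X 1 +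
        MvPolynomial.C (c : ℚ) * MvPolynomial.X 0 * MvPolynomial.X 1 ^ 2 +
        MvPolynomial.C (d : ℚ) * MvPolynomial.X 1 ^ 3 : MvPolynomial (Fin 2) ℚ))
    (m n : ℤ) (h : cubicForm a b c d m n = 0) : m = 0 ∧ n = 0 := by
  have nu : ∀ p : MvPolynomial (Fin 2) ℚ, MvPolynomial.eval (fun _ => (0:ℚ)) p = 0 → ¬ IsUnit p := by
    intro p hp hu
    have := hu.map (MvPolynomial.eval (fun _ => (0:ℚ)))
    rw [hp] at this
    exact not_isUnit_zero this
  by_contra hne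
  by_cases hn : n = 0
  · subst hn
    have hm : m ≠ 0 := fun h => hne ⟨h, rfl⟩
    have ha : a = 0 := by
      unfold cubicForm at h
      have : a * m ^ 3 = 0 := by linear_combination h
      exact (mul_eq_zero.mp this).resolve_right (pow_ne_zero _ hm)
    subst ha
    have := hirr.isUnit_or_isUnit (a := MvPolynomial.X 1)
      (b := MvPolynomial.C (b : ℚ) * MvPolynomial.X 0 ^ 2 +
        MvPolynomial.C (c : ℚ) * MvPolynomial.X 0 * MvPolynomial.X 1 +
        MvPolynomial.C (d : ℚ) * MvPolynomial.X 1 ^ 2) (by simp; ring)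
    rcases this with hu | hu
    · exact nu _ (by simp) hu
    · exact nu _ (by simp) hu
  · have hnq : (n:ℚ) ≠ 0 := by exact_mod_cast hn
    obtain ⟨θ, hθ⟩ : ∃ θ : ℚ, (m:ℚ) = θ * n := ⟨m / n, by field_simp⟩
    have hq : (a:ℚ) * θ ^ 3 + b * θ ^ 2 + c * θ + d = 0 := by
      have h' : (a:ℚ) * m ^ 3 + b * m ^ 2 * n + c * m * n ^ 2 + d * n ^ 3 = 0 := by
        unfold cubicForm at h; exact_mod_cast h
      rw [hθ] at h'
      have : ((a:ℚ) * θ ^ 3 + b * θ ^ 2 + c * θ + d) * n ^ 3 = 0 := by linear_combination h'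
      exact (mul_eq_zero.mp this).resolve_right (pow_ne_zero _ hnq)
    have hd : (d:ℚ) = -((a:ℚ) * θ ^ 3 + b * θ ^ 2 + c * θ) := by linarith
    have := hirr.isUnit_or_isUnit (a := MvPolynomial.X 0 - MvPolynomial.C θ * MvPolynomial.X 1)
      (b := MvPolynomial.C (a : ℚ) * MvPolynomial.X 0 ^ 2 +
        MvPolynomial.C ((a:ℚ) * θ + b) * MvPolynomial.X 0 * MvPolynomial.X 1 +
        MvPolynomial.C ((a:ℚ) * θ ^ 2 + b * θ + c) * MvPolynomial.X 1 ^ 2) (by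
          rw [hd]; simp only [map_add, map_mul, map_neg, map_pow]; ring)
    rcases this with hu | hu
    · exact nu _ (by simp) hu
    · exact nu _ (by simp) hu

end Part8

lemma form_expand (a b c d m n m' n' X Y : ℤ) :
    cubicForm (cubicForm a b c d m n)
      (3 * a * m ^ 2 * m' + b * (m ^ 2 * n' + 2 * m * n * m') + c * (2 * m * n * n' + n ^ 2 * m') + 3 * d * n ^ 2 * n')
      (3 * a * m * m' ^ 2 + b * (m' ^ 2 * n + 2 * m * n' * m') + c * (2 * m' * n * n' + n' ^ 2 * m) + 3 * d * n * n' ^ 2)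
      (cubicForm a b c d m' n') X Y = cubicForm a b c d (X * m + Y * m') (X * n + Y * n') := by
  unfold cubicForm; ring

lemma disc_expand (a b c d m n m' n' : ℤ) :
    cubicDisc (cubicForm a b c d m n)
      (3 * a * m ^ 2 * m' + b * (m ^ 2 * n' + 2 * m * n * m') + c * (2 * m * n * n' + n ^ 2 * m') + 3 * d * n ^ 2 * n')
      (3 * a * m * m' ^ 2 + b * (m' ^ 2 * n + 2 * m * n' * m') + c * (2 * m' * n * n' + n' ^ 2 * m) + 3 * d * n * n' ^ 2)
      (cubicForm a b c d m' n') = (m * n' - n * m') ^ 6 * cubicDisc a b c d := by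
  unfold cubicForm cubicDisc; ring

lemma form_coeffs (a b c d m n m' n' : ℤ) : ∃ a' b' c' d' : ℤ,
    (∀ X Y, cubicForm a' b' c' d' X Y = cubicForm a b c d (X * m + Y * m') (X * n + Y * n')) ∧
    cubicDisc a' b' c' d' = (m * n' - n * m') ^ 6 * cubicDisc a b c d :=
  ⟨_, _, _, _, form_expand a b c d m n m' n', disc_expand a b c d m n m' n'⟩

/-- The main statement once the automorphism is known to have order three. -/
lemma order_three (a b c d p q r : ℤ) (hpq : p ^ 2 + p + 1 = -(q * r))
    (hinv : ∀ x y, cubicForm a b c d (p * x + q * y) (r * x + (-1 - p) * y) = cubicForm a b c d x y)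
    (hD : 2560000000000000000 ≤ cubicDisc a b c d) (x0 y0 x y : ℤ)
    (h0 : cubicForm a b c d x0 y0 = 1) (h1 : cubicForm a b c d x y = 1) :
    (x = x0 ∧ y = y0) ∨ (x = p * x0 + q * y0 ∧ y = r * x0 + (-1 - p) * y0) ∨
    (x = (-1 - p) * x0 - q * y0 ∧ y = - r * x0 + p * y0) := by
  obtain ⟨m, n, hmn⟩ := rep_one r.natAbs r (-(2 * p + 1)) (-q) le_rfl (by linear_combination 4 * hpq)
  obtain ⟨m', hm'⟩ : ∃ m', m' = p * m + q * n := ⟨_, rfl⟩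
  obtain ⟨n', hn'⟩ : ∃ n', n' = r * m + (-1 - p) * n := ⟨_, rfl⟩
  have hdet : (m * n' - n * m') ^ 2 = 1 := by rw [← hmn, hm', hn']; ring
  obtain ⟨a', b', c', d', hf, hd⟩ := form_coeffs a b c d m n m' n'
  have hd1 : cubicDisc a' b' c' d' = cubicDisc a b c d := by
    rw [hd, show (m * n' - n * m') ^ 6 = ((m * n' - n * m') ^ 2) ^ 3 by ring, hdet]; ring
  have hinv' : ∀ X Y, cubicForm a' b' c' d' (-Y) (X - Y) = cubicForm a' b' c' d' X Y := by
    intro X Y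
    rw [hf, hf, ← hinv (X * m + Y * m')]
    congr 1
    · rw [hm', hn']; linear_combination (-(Y * m)) * hpq
    · rw [hm', hn']; linear_combination (-(Y * n)) * hpq
  have e1 := hinv' 1 0
  have e2 := hinv' 1 1
  unfold cubicForm at e1 e2
  have ed : d' = a' := by linear_combination e1
  have ec : c' = -(b' + 3 * a') := by linear_combination -e2 - ed
  rw [ed, ec] at hf hd1
  have coord : ∀ u v : ℤ, ∃ X Y : ℤ, u = X * m + Y * m' ∧ v = X * n + Y * n' := by
    intro u v
    refine ⟨(m * n' - n * m') * (u * n' - v * m'), (m * n' - n * m') * (m * v - n * u), ?_, ?_⟩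
    · linear_combination (-u) * hdet
    · linear_combination (-v) * hdet
  obtain ⟨X0, Y0, u0, v0⟩ := coord x0 y0
  obtain ⟨X, Y, u, v⟩ := coord x y
  have s := std a' b' X0 Y0 X Y (by rw [hd1]; exact hD) (by rw [hf, ← u0, ← v0, h0]) (by rw [hf, ← u, ← v, h1])
  rcases s with ⟨rfl, rfl⟩ | ⟨rfl, rfl⟩ | ⟨rfl, rfl⟩
  · left; exact ⟨by rw [u, u0], by rw [v, v0]⟩
  · right; left
    constructor
    · rw [u, u0, v0, hm', hn']; linear_combination (-(Y0 * m)) * hpq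
    · rw [v, u0, v0, hm', hn']; linear_combination (-(Y0 * n)) * hpq
  · right; right
    constructor
    · rw [u, u0, v0, hm', hn']; linear_combination (Y0 * m) * hpq
    · rw [v, u0, v0, hm', hn']; linear_combination (Y0 * n) * hpq

lemma classify (a b c d p q r s : ℤ)
    (hz : ∀ m n, cubicForm a b c d m n = 0 → m = 0 ∧ n = 0)
    (hdet : p * s - q * r = 1 ∨ p * s - q * r = -1) (hne : ¬ (p = 1 ∧ q = 0 ∧ r = 0 ∧ s = 1))
    (hinv : ∀ x y, cubicForm a b c d (p * x + q * y) (r * x + s * y) = cubicForm a b c d x y) :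
    p + s = -1 ∧ p * s - q * r = 1 := by
  have ha : a ≠ 0 := by
    rintro rfl
    have := hz 1 0 (by unfold cubicForm; ring)
    omega
  by_cases hr : r = 0
  · exfalso
    subst hr
    have h1 := hinv 1 0
    have hp3 : p ^ 3 = 1 := by
      unfold cubicForm at h1
      apply mul_left_cancel₀ ha
      linear_combination h1
    have hp : p = 1 := by
      have : p ∣ 1 := Dvd.intro (p ^ 2) (by rw [← hp3]; ring)
      rcases Int.isUnit_iff.mp (isUnit_of_dvd_one this) with h | h
      · exact h
      · rw [h] at hp3; norm_num at hp3
    subst hp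
    rcases hdet with h | h
    · have hs : s = 1 := by linarith
      subst hs
      have h2 := hinv 1 1
      have h3 := hinv 1 (-1)
      have h4 := hinv 0 1
      unfold cubicForm at h2 h3 h4
      have : a * q = 0 := by nlinarith
      have hq := (mul_eq_zero.mp this).resolve_left ha
      exact hne ⟨rfl, hq, rfl, rfl⟩
    · have hs : s = -1 := by linarith
      subst hs
      have h2 := hinv q (-2)
      have : cubicForm a b c d q (-2) = 0 := by
        unfold cubicForm at h2 ⊢; linarith
      have := hz _ _ this
      omega
  obtain ⟨a', b', c', d', hf, -⟩ := form_coeffs a b c d 1 0 p r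
  have ha' : a' ≠ 0 := by
    have h1 := hf 1 0
    unfold cubicForm at h1
    intro h
    apply ha
    rw [h] at h1
    linear_combination -h1
  have hG : a' - b' + c' - d' ≠ 0 := by
    intro h
    have h1 := hf 1 (-1)
    have h2 : cubicForm a' b' c' d' 1 (-1) = 0 := by unfold cubicForm; linear_combination h
    rw [h2] at h1
    have := (hz _ _ h1.symm).2
    omega
  have hinv' : ∀ X Y, cubicForm a' b' c' d' (-(p * s - q * r) * Y) (X + (p + s) * Y) = cubicForm a' b' c' d' X Y := by
    intro X Y
    rw [hf, hf, ← hinv (X * 1 + Y * p)]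
    congr 1 <;> ring
  obtain ⟨t, ht⟩ : ∃ t, t = p + s := ⟨_, rfl⟩
  rw [← ht] at hinv' ⊢
  have h10 := hinv' 1 0
  have h01 := hinv' 0 1
  have h11 := hinv' 1 1
  have h12 := hinv' 1 (-1)
  unfold cubicForm at h10 h01 h11 h12
  have ed : d' = a' := by linear_combination h10
  subst ed
  rcases hdet with h | h
  · rw [h] at h01 h11 h12 ⊢
    refine ⟨?_, rfl⟩
    by_contra hne1
    have k1 : b' = 3 * t * d' - c' := by linarith
    have k2 : b' - 2 * t * c' + 3 * t ^ 2 * d' = c' := by linarith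
    have k3 : -d' + b' * t - c' * t ^ 2 + d' * t ^ 3 = d' := by linear_combination h01
    have ht1 : 1 + t ≠ 0 := by omega
    have k4 : 2 * c' = 3 * t * d' := by
      apply mul_left_cancel₀ ht1
      linear_combination k1 - k2
    have k5 : d' * ((t + 1) * (t - 2) ^ 2) = 0 := by
      linear_combination (-2) * k3 + 2 * t * k1 - (t + t ^ 2) * k4
    have k6 := (mul_eq_zero.mp k5).resolve_left ha'
    have k7 := (mul_eq_zero.mp k6).resolve_left (by omega)
    have k8 : t = 2 := by have := pow_eq_zero_iff (two_ne_zero) |>.mp k7; omega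
    subst k8
    apply hG
    linarith
  · exfalso
    rw [h] at h01 h11 h12
    have k1 : b' = 3 * t * d' + c' := by linarith
    have k2 : b' + 2 * t * c' + 3 * t ^ 2 * d' = c' := by linarith
    have k3 : d' + b' * t + c' * t ^ 2 + d' * t ^ 3 = d' := by linear_combination h01
    by_cases ht0 : t = 0
    · subst ht0
      apply hG
      linarith
    · have k4 : 3 * d' + 2 * c' + 3 * t * d' = 0 := by
        apply mul_left_cancel₀ ht0
        linear_combination k2 - k1
      have k5 : b' + c' * t + d' * t ^ 2 = 0 := by
        apply mul_left_cancel₀ ht0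
        linear_combination k3
      have k6 : d' * (t ^ 2 + 3) = 0 := by
        linear_combination (-2) * k5 + 2 * k1 + (1 + t) * k4
      rcases mul_eq_zero.mp k6 with k | k
      · exact ha' k
      · nlinarith [sq_nonneg t]

theorem stmt8 (a b c d : ℤ)
    (hirr : Irreducible
      (MvPolynomial.C (a : ℚ) * MvPolynomial.X 0 ^ 3 +
        MvPolynomial.C (b : ℚ) * MvPolynomial.X 0 ^ 2 * MvPolynomial.X 1 +
        MvPolynomial.C (c : ℚ) * MvPolynomial.X 0 * MvPolynomial.X 1 ^ 2 +
        MvPolynomial.C (d : ℚ) * MvPolynomial.X 1 ^ 3 : MvPolynomial (Fin 2) ℚ))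
    (hDpos : 0 < cubicDisc a b c d)
    (haut : ∃ A : GL (Fin 2) ℤ, A ≠ 1 ∧ ∀ x y : ℤ,
      cubicForm a b c d
        ((A : Matrix (Fin 2) (Fin 2) ℤ) 0 0 * x + (A : Matrix (Fin 2) (Fin 2) ℤ) 0 1 * y)
        ((A : Matrix (Fin 2) (Fin 2) ℤ) 1 0 * x + (A : Matrix (Fin 2) (Fin 2) ℤ) 1 1 * y) =
        cubicForm a b c d x y)
    (hD : 2560000000000000000 ≤ cubicDisc a b c d) :
    {p : ℤ × ℤ | cubicForm a b c d p.1 p.2 = 1}.Finite ∧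
      ({p : ℤ × ℤ | cubicForm a b c d p.1 p.2 = 1}.ncard = 0 ∨
        {p : ℤ × ℤ | cubicForm a b c d p.1 p.2 = 1}.ncard = 3) := by
  obtain ⟨A, hA1, hinv⟩ := haut
  obtain ⟨p, hp⟩ : ∃ p, p = (A : Matrix (Fin 2) (Fin 2) ℤ) 0 0 := ⟨_, rfl⟩
  obtain ⟨q, hq⟩ : ∃ p, p = (A : Matrix (Fin 2) (Fin 2) ℤ) 0 1 := ⟨_, rfl⟩
  obtain ⟨r, hr⟩ : ∃ p, p = (A : Matrix (Fin 2) (Fin 2) ℤ) 1 0 := ⟨_, rfl⟩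
  obtain ⟨s, hs⟩ : ∃ p, p = (A : Matrix (Fin 2) (Fin 2) ℤ) 1 1 := ⟨_, rfl⟩
  rw [← hp, ← hq, ← hr, ← hs] at hinv
  have hdet : p * s - q * r = 1 ∨ p * s - q * r = -1 := by
    have := (Matrix.isUnit_iff_isUnit_det _).mp A.isUnit
    rw [Matrix.det_fin_two, ← hp, ← hq, ← hr, ← hs] at this
    exact Int.isUnit_iff.mp this
  have hne : ¬ (p = 1 ∧ q = 0 ∧ r = 0 ∧ s = 1) := by
    rintro ⟨rfl, rfl, rfl, rfl⟩
    apply hA1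
    apply Units.ext
    ext i j
    fin_cases i <;> fin_cases j <;> simp [← hp, ← hq, ← hr, ← hs]
  have hz := no_zero a b c d hirr
  obtain ⟨ht, hd1⟩ := classify a b c d p q r s hz hdet hne hinv
  have hs' : s = -1 - p := by omega
  subst hs'
  have hpq : p ^ 2 + p + 1 = -(q * r) := by linear_combination -hd1
  have h3 := order_three a b c d p q r hpq hinv hD
  by_cases hemp : ∃ v : ℤ × ℤ, cubicForm a b c d v.1 v.2 = 1
  · obtain ⟨⟨x0, y0⟩, h0⟩ := hemp
    simp only at h0
    have hset : {p : ℤ × ℤ | cubicForm a b c d p.1 p.2 = 1} =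
        (({(x0, y0), (p * x0 + q * y0, r * x0 + (-1 - p) * y0),
          ((-1 - p) * x0 - q * y0, - r * x0 + p * y0)} : Finset (ℤ × ℤ)) : Set (ℤ × ℤ)) := by
      ext ⟨x, y⟩
      simp only [Set.mem_ofPred_eq, Finset.coe_insert, Finset.coe_singleton, Set.mem_insert_iff,
        Set.mem_singleton_iff, Prod.mk.injEq]
      constructor
      · intro h1
        exact h3 x0 y0 x y h0 h1
      · have i1 : cubicForm a b c d (p * x0 + q * y0) (r * x0 + (-1 - p) * y0) = 1 := by rw [hinv, h0]
        rintro (⟨rfl, rfl⟩ | ⟨rfl, rfl⟩ | ⟨rfl, rfl⟩)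
        · exact h0
        · exact i1
        · refine Eq.trans ?_ ((hinv (p * x0 + q * y0) (r * x0 + (-1 - p) * y0)).trans i1)
          congr 1
          · linear_combination (-x0) * hpq
          · linear_combination (-y0) * hpq
    have hnz : ¬ (x0 = 0 ∧ y0 = 0) := by
      rintro ⟨rfl, rfl⟩
      norm_num [cubicForm] at h0
    have fix : ∀ x y : ℤ, p * x + q * y = x → r * x + (-1 - p) * y = y → x = 0 ∧ y = 0 := by
      intro x y e1 e2
      have f1 : 3 * x = 0 := by linear_combination (-(p + 2)) * e1 - q * e2 + x * hpq
      have f2 : 3 * y = 0 := by linear_combination (-r) * e1 + (p - 1) * e2 + y * hpq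
      omega
    rw [hset]
    refine ⟨Finset.finite_toSet _, Or.inr ?_⟩
    rw [Set.ncard_coe_finset, Finset.card_eq_three]
    refine ⟨_, _, _, ?_, ?_, ?_, rfl⟩
    · intro h
      rw [Prod.mk.injEq] at h
      exact hnz (fix x0 y0 h.1.symm h.2.symm)
    · intro h
      rw [Prod.mk.injEq] at h
      obtain ⟨e1, e2⟩ := h
      refine hnz (fix x0 y0 ?_ ?_)
      · linear_combination p * e1 + q * e2 - x0 * hpq
      · linear_combination r * e1 + (-1 - p) * e2 - y0 * hpq
    · intro h
      rw [Prod.mk.injEq] at h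
      obtain ⟨e1, e2⟩ := h
      refine hnz (fix x0 y0 ?_ ?_)
      · linear_combination (1 + p) * e1 + q * e2 - 2 * x0 * hpq
      · linear_combination r * e1 - p * e2 - 2 * y0 * hpq
  · have : {p : ℤ × ℤ | cubicForm a b c d p.1 p.2 = 1} = ∅ := by
      ext v
      simp only [Set.mem_ofPred_eq, Set.mem_empty_iff_false, iff_false]
      exact fun h => hemp ⟨v, h⟩
    rw [this]
    exact ⟨Set.finite_empty, Or.inl (Set.ncard_empty _)⟩
end

section
/- Let m ≥ 18 be an even integer and let θ₂ be the unique root of f_m in the interval (−1/2, 0). Then the continued fraction expansion of θ₂ begins as follows (where [·] in the final listed entry denotes the integer part, and the expansion continues beyond the listed partial quotients): [−1; 1, m+1, m/2, 1, 3, (m−14)/14, 1, 6, [m/6], …] if m ≡ 0 (mod 14) and m ≥ 28; [−1; 1, m+1, m/2, 1, 3, (m−2)/14, [(49m+72)/6], …] if m ≡ 2 (mod 14) and m ≥ 156; [−1; 1, m+1, m/2, 1, 3, (m−4)/14, 6, 1, [(m−4)/6], …] if m ≡ 4 (mod 14) and m ≥ 18; [−1; 1, m+1, m/2, 1, 3,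 (m−6)/14, 3, 2, [(m−2)/6], …] if m ≡ 6 (mod 14) and m ≥ 20; [−1; 1, m+1, m/2, 1, 3, (m−8)/14, 2, 3, [(m−2)/6], …] if m ≡ 8 (mod 14) and m ≥ 22; [−1; 1, m+1, m/2, 1, 3, (m−10)/14, 1, 1, 2, 1, [(m−4)/6], …] if m ≡ 10 (mod 14) and m ≥ 24; [−1; 1, m+1, m/2, 1, 3, (m−12)/14, 1, 2, 1, 1, [(m−2)/6], …] if m ≡ 12 (mod 14) and m ≥ 68. -/
/-- The regular continued fraction expansion of `θ` begins `[a₀; a₁, a₂, …]` with the listed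
partial quotients `as`, and continues beyond them. -/
def cfBegins (θ : ℝ) (a₀ : ℤ) (as : List ℤ) : Prop :=
  ⌊θ⌋ = a₀ ∧
  (∀ i : ℕ, ∀ h : i < as.length,
    (GenContFract.of θ).partDens.get? i = some ((as.get ⟨i, h⟩ : ℤ) : ℝ)) ∧
  ((GenContFract.of θ).partDens.get? as.length).isSome

/-- Partial denominators shift under taking the inverse of the fractional part. -/
lemma cf_partDens_succ (x : ℝ) (n : ℕ) :
    (GenContFract.of x).partDens.get? (n + 1)
      = (GenContFract.of (Int.fract x)⁻¹).partDens.get? n := by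
  simp only [GenContFract.partDens, Stream'.Seq.map_get?, GenContFract.of_s_succ]

lemma cf_partDens_zero {x : ℝ} (h : Int.fract x ≠ 0) :
    (GenContFract.of x).partDens.get? 0 = some ((⌊(Int.fract x)⁻¹⌋ : ℤ) : ℝ) := by
  have h2 := GenContFract.of_s_head h
  simp only [GenContFract.partDens, Stream'.Seq.map_get?]
  rw [show (GenContFract.of x).s.get? 0 = (GenContFract.of x).s.head from rfl, h2]
  rfl

/-- `u / v > 1` and its continued fraction begins with the given data. -/
def QStep (u v : ℝ) (a : ℤ) (as : List ℤ) : Prop :=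
  0 < v ∧ v < u ∧ cfBegins (u / v) a as

lemma cf_floor {u v : ℝ} {a : ℤ} (hv : 0 < u - a * v) (hlt : u - a * v < v) : ⌊u / v⌋ = a := by
  have h0 : 0 < v := hv.trans hlt
  rw [Int.floor_eq_iff]
  constructor
  · rw [le_div_iff₀ h0]; linarith
  · rw [div_lt_iff₀ h0]; linarith

lemma cf_fract {u v : ℝ} {a : ℤ} (hv : 0 < u - a * v) (hlt : u - a * v < v) :
    Int.fract (u / v) = (u - a * v) / v := by
  have h0 : 0 < v := hv.trans hlt
  rw [Int.fract, cf_floor hv hlt]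
  field_simp

lemma cf_step {u v : ℝ} {a b : ℤ} {bs : List ℤ} (h : QStep v (u - a * v) b bs) :
    cfBegins (u / v) a (b :: bs) := by
  obtain ⟨h1, h2, h3, h4, h5⟩ := h
  have hf := cf_fract h1 h2
  have h0 : 0 < v := h1.trans h2
  have hne : Int.fract (u / v) ≠ 0 := by rw [hf]; positivity
  have hinv : (Int.fract (u / v))⁻¹ = v / (u - a * v) := by rw [hf, inv_div]
  refine ⟨cf_floor h1 h2, ?_, ?_⟩
  · intro i hi
    cases i with
    | zero =>
      rw [cf_partDens_zero hne, hinv, h3]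
      rfl
    | succ n =>
      rw [cf_partDens_succ, hinv]
      exact h4 n (by simpa using hi)
  · rw [List.length_cons, cf_partDens_succ, hinv]
    exact h5

lemma q_step {u v : ℝ} {a b : ℤ} {bs : List ℤ} (ha : 1 ≤ a) (h : QStep v (u - a * v) b bs) :
    QStep u v a (b :: bs) := by
  have h1 := h.1
  have h2 := h.2.1
  have ha' : (1 : ℝ) ≤ a := by exact_mod_cast ha
  refine ⟨h1.trans h2, ?_, cf_step h⟩
  nlinarith

lemma q_base {u v : ℝ} {b : ℤ} (N K : ℤ) (hb : 1 ≤ b) (hN' : 6 * b ≤ N) (hK' : K ≤ 6 * b + 6)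
    (hNK' : N < K) (h1 : 0 < 6 * u - N * v) (h2 : 0 < K * v - 6 * u) :
    QStep u v b [] := by
  have hN : (6 : ℝ) * b ≤ N := by exact_mod_cast hN'
  have hK : (K : ℝ) ≤ 6 * b + 6 := by exact_mod_cast hK'
  have hNK : (N : ℝ) < K := by exact_mod_cast hNK'
  have hv : 0 < v := by nlinarith
  have hb' : (1 : ℝ) ≤ b := by exact_mod_cast hb
  have l1 : 0 < u - b * v := by nlinarith
  have l2 : u - b * v < v := by nlinarith
  refine ⟨hv, by nlinarith, cf_floor l1 l2, ?_, ?_⟩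
  · intro i hi
    simp at hi
  · have hne : Int.fract (u / v) ≠ 0 := by rw [cf_fract l1 l2]; positivity
    rw [List.length_nil, cf_partDens_zero hne]
    rfl

lemma exists_shift {t : ℤ} (n : ℤ) (h : n ≤ t) : ∃ s : ℝ, 0 ≤ s ∧ (t : ℝ) = s + n :=
  ⟨t - n, sub_nonneg.2 (by exact_mod_cast h), by ring⟩

/-- Locating `θ` to the right of `-A / B`. -/
lemma root_gt {M θ A B : ℝ} (hM : 0 < M)
    (hroot : θ ^ 3 - M * θ ^ 2 - (M + 3) * θ - 1 = 0)
    (hl : -(1 / 2) < θ) (hr : θ < 0) (hA : 0 < A) (hB : 0 < B - 2 * A)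
    (hF : 0 < (-A) ^ 3 - M * (-A) ^ 2 * B - (M + 3) * (-A) * B ^ 2 - B ^ 3) :
    0 < A + B * θ := by
  have hB0 : 0 < B := by linarith
  obtain ⟨r, rfl⟩ : ∃ r, A = -(r * B) := ⟨-A / B, by field_simp⟩
  have r0 : r < 0 := by nlinarith
  have r1 : -(1 / 2) < r := by nlinarith
  have hF' : 0 < (r ^ 3 - M * r ^ 2 - (M + 3) * r - 1) * B ^ 3 := by linear_combination hF
  have hF2 : 0 < r ^ 3 - M * r ^ 2 - (M + 3) * r - 1 := pos_of_mul_pos_left hF' (by positivity)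
  by_contra hc
  have hle : θ ≤ r := by nlinarith
  have hfac : θ ^ 2 + θ * r + r ^ 2 - M * (θ + r) - (M + 3) < 0 := by
    nlinarith [mul_pos hM (by linarith : 0 < θ + r + 1)]
  nlinarith [mul_nonneg (sub_nonneg.2 hle) (neg_nonneg.2 hfac.le)]

/-- Locating `θ` to the left of `-A / B`. -/
lemma root_lt {M θ A B : ℝ} (hM : 0 < M)
    (hroot : θ ^ 3 - M * θ ^ 2 - (M + 3) * θ - 1 = 0)
    (hl : -(1 / 2) < θ) (hr : θ < 0) (hA : 0 < A) (hB : 0 < B - 2 * A)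
    (hF : 0 < -((-A) ^ 3 - M * (-A) ^ 2 * B - (M + 3) * (-A) * B ^ 2 - B ^ 3)) :
    A + B * θ < 0 := by
  have hB0 : 0 < B := by linarith
  obtain ⟨r, rfl⟩ : ∃ r, A = -(r * B) := ⟨-A / B, by field_simp⟩
  have r0 : r < 0 := by nlinarith
  have r1 : -(1 / 2) < r := by nlinarith
  have hF' : 0 < -(r ^ 3 - M * r ^ 2 - (M + 3) * r - 1) * B ^ 3 := by linear_combination hF
  have hF2 : 0 < -(r ^ 3 - M * r ^ 2 - (M + 3) * r - 1) := pos_of_mul_pos_left hF' (by positivity)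
  by_contra hc
  have hle : r ≤ θ := by nlinarith
  have hfac : θ ^ 2 + θ * r + r ^ 2 - M * (θ + r) - (M + 3) < 0 := by
    nlinarith [mul_pos hM (by linarith : 0 < θ + r + 1)]
  nlinarith [mul_nonneg (sub_nonneg.2 hle) (neg_nonneg.2 hfac.le)]

lemma case_0 (t b : ℤ) (ht : 2 ≤ t) (hb1 : 6 * b ≤ 1 * (14 * t + 0) + 0)
    (hb2 : 1 * (14 * t + 0) + 0 + 2 ≤ 6 * b + 6) (θ : ℝ)
    (hroot : θ ^ 3 - (14 * (t : ℝ) + 0) * θ ^ 2 - ((14 * (t : ℝ) + 0) + 3) * θ - 1 = 0)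
    (hθl : -(1 / 2) < θ) (hθr : θ < 0) :
    cfBegins θ (-1) [1, 14 * t + 1, 7 * t, 1, 3, t - 1, 1, 6, b] := by
  obtain ⟨s, hs, hts⟩ := exists_shift 2 (by omega : 2 ≤ t)
  push_cast at hts
  have hM : (0 : ℝ) < 14 * (t : ℝ) + 0 := by rw [hts]; positivity
  have h1 := root_lt (A := 2744 * t ^ 3 + 756 * t ^ 2 + 116 * t + 6)
    (B := 38416 * t ^ 4 + 16072 * t ^ 3 + 3528 * t ^ 2 + 382 * t + 18)
    hM hroot hθl hθr (by rw [hts]; ring_nf; positivity)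
    (by rw [hts]; ring_nf; positivity) (by rw [hts]; ring_nf; positivity)
  have h2 := root_gt (A := 2744 * t ^ 3 + 1148 * t ^ 2 + 200 * t + 14)
    (B := 38416 * t ^ 4 + 21560 * t ^ 3 + 5488 * t ^ 2 + 718 * t + 40)
    hM hroot hθl hθr (by rw [hts]; ring_nf; positivity)
    (by rw [hts]; ring_nf; positivity) (by rw [hts]; ring_nf; positivity)
  rw [← div_one θ]
  apply cf_step
  iterate 8 refine q_step (by omega) ?_
  apply q_base (1 * (14 * t + 0) + 0) (1 * (14 * t + 0) + 2) <;> try omega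
  · push_cast
    linear_combination h1
  · push_cast
    linear_combination h2

lemma case_2 (t b : ℤ) (ht : 12 ≤ t) (hb1 : 6 * b ≤ 49 * (14 * t + 2) + 72)
    (hb2 : 49 * (14 * t + 2) + 72 + 2 ≤ 6 * b + 6) (θ : ℝ)
    (hroot : θ ^ 3 - (14 * (t : ℝ) + 2) * θ ^ 2 - ((14 * (t : ℝ) + 2) + 3) * θ - 1 = 0)
    (hθl : -(1 / 2) < θ) (hθr : θ < 0) :
    cfBegins θ (-1) [1, 14 * t + 2 + 1, 7 * t + 1, 1, 3, t, b] := by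
  obtain ⟨s, hs, hts⟩ := exists_shift 12 (by omega : 12 ≤ t)
  push_cast at hts
  have hM : (0 : ℝ) < 14 * (t : ℝ) + 2 := by rw [hts]; positivity
  have h1 := root_lt (A := 19208 * t ^ 3 + 14364 * t ^ 2 + 3920 * t + 382)
    (B := 268912 * t ^ 4 + 277928 * t ^ 3 + 115080 * t ^ 2 + 22394 * t + 1722)
    hM hroot hθl hθr (by rw [hts]; ring_nf; positivity)
    (by rw [hts]; ring_nf; positivity) (by rw [hts]; ring_nf; positivity)
  have h2 := root_gt (A := 19208 * t ^ 3 + 14420 * t ^ 2 + 3948 * t + 386)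
    (B := 268912 * t ^ 4 + 278712 * t ^ 3 + 115696 * t ^ 2 + 22570 * t + 1740)
    hM hroot hθl hθr (by rw [hts]; ring_nf; positivity)
    (by rw [hts]; ring_nf; positivity) (by rw [hts]; ring_nf; positivity)
  rw [← div_one θ]
  apply cf_step
  iterate 6 refine q_step (by omega) ?_
  apply q_base (49 * (14 * t + 2) + 72) (49 * (14 * t + 2) + 74) <;> try omega
  · push_cast
    linear_combination h1
  · push_cast
    linear_combination h2

lemma case_2_small (t b : ℤ) (ht : t = 11) (hb1 : 6 * b ≤ 49 * (14 * t + 2) + 72)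
    (hb2 : 49 * (14 * t + 2) + 72 + 6 ≤ 6 * b + 6) (θ : ℝ)
    (hroot : θ ^ 3 - (14 * (t : ℝ) + 2) * θ ^ 2 - ((14 * (t : ℝ) + 2) + 3) * θ - 1 = 0)
    (hθl : -(1 / 2) < θ) (hθr : θ < 0) :
    cfBegins θ (-1) [1, 14 * t + 2 + 1, 7 * t + 1, 1, 3, t, b] := by
  obtain ⟨s, hs, hts⟩ := exists_shift 11 (by omega : 11 ≤ t)
  push_cast at hts
  have hM : (0 : ℝ) < 14 * (t : ℝ) + 2 := by rw [hts]; positivity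
  have h1 := root_lt (A := 19208 * t ^ 3 + 14364 * t ^ 2 + 3920 * t + 382)
    (B := 268912 * t ^ 4 + 277928 * t ^ 3 + 115080 * t ^ 2 + 22394 * t + 1722)
    hM hroot hθl hθr (by rw [hts]; ring_nf; positivity)
    (by rw [hts]; ring_nf; positivity) (by rw [hts]; ring_nf; positivity)
  have h2 := root_gt (A := 19208 * t ^ 3 + 14532 * t ^ 2 + 4004 * t + 394)
    (B := 268912 * t ^ 4 + 280280 * t ^ 3 + 116928 * t ^ 2 + 22922 * t + 1776)
    hM hroot hθl hθr (by rw [hts]; ring_nf; positivity)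
    (by rw [hts]; ring_nf; positivity) (by rw [hts]; ring_nf; positivity)
  rw [← div_one θ]
  apply cf_step
  iterate 6 refine q_step (by omega) ?_
  apply q_base (49 * (14 * t + 2) + 72) (49 * (14 * t + 2) + 78) <;> try omega
  · push_cast
    linear_combination h1
  · push_cast
    linear_combination h2

lemma case_4 (t b : ℤ) (ht : 1 ≤ t) (hb1 : 6 * b ≤ 1 * (14 * t + 4) + -4)
    (hb2 : 1 * (14 * t + 4) + -4 + 2 ≤ 6 * b + 6) (θ : ℝ)
    (hroot : θ ^ 3 - (14 * (t : ℝ) + 4) * θ ^ 2 - ((14 * (t : ℝ) + 4) + 3) * θ - 1 = 0)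
    (hθl : -(1 / 2) < θ) (hθr : θ < 0) :
    cfBegins θ (-1) [1, 14 * t + 4 + 1, 7 * t + 2, 1, 3, t, 6, 1, b] := by
  obtain ⟨s, hs, hts⟩ := exists_shift 1 (by omega : 1 ≤ t)
  push_cast at hts
  have hM : (0 : ℝ) < 14 * (t : ℝ) + 4 := by rw [hts]; positivity
  have h1 := root_lt (A := 2744 * t ^ 3 + 3164 * t ^ 2 + 1264 * t + 174)
    (B := 38416 * t ^ 4 + 60760 * t ^ 3 + 37072 * t ^ 2 + 10318 * t + 1104)
    hM hroot hθl hθr (by rw [hts]; ring_nf; positivity)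
    (by rw [hts]; ring_nf; positivity) (by rw [hts]; ring_nf; positivity)
  have h2 := root_gt (A := 2744 * t ^ 3 + 3556 * t ^ 2 + 1572 * t + 238)
    (B := 38416 * t ^ 4 + 66248 * t ^ 3 + 43736 * t ^ 2 + 13118 * t + 1510)
    hM hroot hθl hθr (by rw [hts]; ring_nf; positivity)
    (by rw [hts]; ring_nf; positivity) (by rw [hts]; ring_nf; positivity)
  rw [← div_one θ]
  apply cf_step
  iterate 8 refine q_step (by omega) ?_
  apply q_base (1 * (14 * t + 4) + -4) (1 * (14 * t + 4) + -2) <;> try omega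
  · push_cast
    linear_combination h1
  · push_cast
    linear_combination h2

lemma case_6 (t b : ℤ) (ht : 1 ≤ t) (hb1 : 6 * b ≤ 1 * (14 * t + 6) + -2)
    (hb2 : 1 * (14 * t + 6) + -2 + 2 ≤ 6 * b + 6) (θ : ℝ)
    (hroot : θ ^ 3 - (14 * (t : ℝ) + 6) * θ ^ 2 - ((14 * (t : ℝ) + 6) + 3) * θ - 1 = 0)
    (hθl : -(1 / 2) < θ) (hθr : θ < 0) :
    cfBegins θ (-1) [1, 14 * t + 6 + 1, 7 * t + 3, 1, 3, t, 3, 2, b] := by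
  obtain ⟨s, hs, hts⟩ := exists_shift 1 (by omega : 1 ≤ t)
  push_cast at hts
  have hM : (0 : ℝ) < 14 * (t : ℝ) + 6 := by rw [hts]; positivity
  have h1 := root_lt (A := 2744 * t ^ 3 + 4228 * t ^ 2 + 2216 * t + 394)
    (B := 38416 * t ^ 4 + 81144 * t ^ 3 + 65240 * t ^ 2 + 23638 * t + 3254)
    hM hroot hθl hθr (by rw [hts]; ring_nf; positivity)
    (by rw [hts]; ring_nf; positivity) (by rw [hts]; ring_nf; positivity)
  have h2 := root_gt (A := 2744 * t ^ 3 + 4620 * t ^ 2 + 2636 * t + 510)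
    (B := 38416 * t ^ 4 + 86632 * t ^ 3 + 74256 * t ^ 2 + 28678 * t + 4212)
    hM hroot hθl hθr (by rw [hts]; ring_nf; positivity)
    (by rw [hts]; ring_nf; positivity) (by rw [hts]; ring_nf; positivity)
  rw [← div_one θ]
  apply cf_step
  iterate 8 refine q_step (by omega) ?_
  apply q_base (1 * (14 * t + 6) + -2) (1 * (14 * t + 6) + 0) <;> try omega
  · push_cast
    linear_combination h1
  · push_cast
    linear_combination h2

lemma case_8 (t b : ℤ) (ht : 1 ≤ t) (hb1 : 6 * b ≤ 1 * (14 * t + 8) + -2)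
    (hb2 : 1 * (14 * t + 8) + -2 + 2 ≤ 6 * b + 6) (θ : ℝ)
    (hroot : θ ^ 3 - (14 * (t : ℝ) + 8) * θ ^ 2 - ((14 * (t : ℝ) + 8) + 3) * θ - 1 = 0)
    (hθl : -(1 / 2) < θ) (hθr : θ < 0) :
    cfBegins θ (-1) [1, 14 * t + 8 + 1, 7 * t + 4, 1, 3, t, 2, 3, b] := by
  obtain ⟨s, hs, hts⟩ := exists_shift 1 (by omega : 1 ≤ t)
  push_cast at hts
  have hM : (0 : ℝ) < 14 * (t : ℝ) + 8 := by rw [hts]; positivity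
  have h1 := root_lt (A := 2744 * t ^ 3 + 5236 * t ^ 2 + 3364 * t + 726)
    (B := 38416 * t ^ 4 + 100744 * t ^ 3 + 99848 * t ^ 2 + 44286 * t + 7410)
    hM hroot hθl hθr (by rw [hts]; ring_nf; positivity)
    (by rw [hts]; ring_nf; positivity) (by rw [hts]; ring_nf; positivity)
  have h2 := root_gt (A := 2744 * t ^ 3 + 5628 * t ^ 2 + 3896 * t + 910)
    (B := 38416 * t ^ 4 + 106232 * t ^ 3 + 111216 * t ^ 2 + 52238 * t + 9288)
    hM hroot hθl hθr (by rw [hts]; ring_nf; positivity)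
    (by rw [hts]; ring_nf; positivity) (by rw [hts]; ring_nf; positivity)
  rw [← div_one θ]
  apply cf_step
  iterate 8 refine q_step (by omega) ?_
  apply q_base (1 * (14 * t + 8) + -2) (1 * (14 * t + 8) + 0) <;> try omega
  · push_cast
    linear_combination h1
  · push_cast
    linear_combination h2

lemma case_10 (t b : ℤ) (ht : 1 ≤ t) (hb1 : 6 * b ≤ 1 * (14 * t + 10) + -4)
    (hb2 : 1 * (14 * t + 10) + -4 + 2 ≤ 6 * b + 6) (θ : ℝ)
    (hroot : θ ^ 3 - (14 * (t : ℝ) + 10) * θ ^ 2 - ((14 * (t : ℝ) + 10) + 3) * θ - 1 = 0)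
    (hθl : -(1 / 2) < θ) (hθr : θ < 0) :
    cfBegins θ (-1) [1, 14 * t + 10 + 1, 7 * t + 5, 1, 3, t, 1, 1, 2, 1, b] := by
  obtain ⟨s, hs, hts⟩ := exists_shift 1 (by omega : 1 ≤ t)
  push_cast at hts
  have hM : (0 : ℝ) < 14 * (t : ℝ) + 10 := by rw [hts]; positivity
  have h1 := root_lt (A := 2744 * t ^ 3 + 6524 * t ^ 2 + 5212 * t + 1398)
    (B := 38416 * t ^ 4 + 124264 * t ^ 3 + 151648 * t ^ 2 + 82726 * t + 17016)
    hM hroot hθl hθr (by rw [hts]; ring_nf; positivity)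
    (by rw [hts]; ring_nf; positivity) (by rw [hts]; ring_nf; positivity)
  have h2 := root_gt (A := 2744 * t ^ 3 + 6916 * t ^ 2 + 5856 * t + 1666)
    (B := 38416 * t ^ 4 + 129752 * t ^ 3 + 165368 * t ^ 2 + 94262 * t + 20278)
    hM hroot hθl hθr (by rw [hts]; ring_nf; positivity)
    (by rw [hts]; ring_nf; positivity) (by rw [hts]; ring_nf; positivity)
  rw [← div_one θ]
  apply cf_step
  iterate 10 refine q_step (by omega) ?_
  apply q_base (1 * (14 * t + 10) + -4) (1 * (14 * t + 10) + -2) <;> try omega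
  · push_cast
    linear_combination h1
  · push_cast
    linear_combination h2

lemma case_12 (t b : ℤ) (ht : 4 ≤ t) (hb1 : 6 * b ≤ 1 * (14 * t + 12) + -2)
    (hb2 : 1 * (14 * t + 12) + -2 + 2 ≤ 6 * b + 6) (θ : ℝ)
    (hroot : θ ^ 3 - (14 * (t : ℝ) + 12) * θ ^ 2 - ((14 * (t : ℝ) + 12) + 3) * θ - 1 = 0)
    (hθl : -(1 / 2) < θ) (hθr : θ < 0) :
    cfBegins θ (-1) [1, 14 * t + 12 + 1, 7 * t + 6, 1, 3, t, 1, 2, 1, 1, b] := by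
  obtain ⟨s, hs, hts⟩ := exists_shift 4 (by omega : 4 ≤ t)
  push_cast at hts
  have hM : (0 : ℝ) < 14 * (t : ℝ) + 12 := by rw [hts]; positivity
  have h1 := root_lt (A := 2744 * t ^ 3 + 7924 * t ^ 2 + 7676 * t + 2494)
    (B := 38416 * t ^ 4 + 149352 * t ^ 3 + 218792 * t ^ 2 + 143134 * t + 35282)
    hM hroot hθl hθr (by rw [hts]; ring_nf; positivity)
    (by rw [hts]; ring_nf; positivity) (by rw [hts]; ring_nf; positivity)
  have h2 := root_gt (A := 2744 * t ^ 3 + 8316 * t ^ 2 + 8432 * t + 2862)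
    (B := 38416 * t ^ 4 + 154840 * t ^ 3 + 234864 * t ^ 2 + 158926 * t + 40488)
    hM hroot hθl hθr (by rw [hts]; ring_nf; positivity)
    (by rw [hts]; ring_nf; positivity) (by rw [hts]; ring_nf; positivity)
  rw [← div_one θ]
  apply cf_step
  iterate 10 refine q_step (by omega) ?_
  apply q_base (1 * (14 * t + 12) + -2) (1 * (14 * t + 12) + 0) <;> try omega
  · push_cast
    linear_combination h1
  · push_cast
    linear_combination h2

theorem stmt10 (m : ℤ) (hm : 18 ≤ m) (heven : Even m) (θ : ℝ)
    (hroot : θ ^ 3 - (m : ℝ) * θ ^ 2 - ((m : ℝ) + 3) * θ - 1 = 0)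
    (hθl : -(1 / 2) < θ) (hθr : θ < 0) :
    (m % 14 = 0 → 28 ≤ m →
      cfBegins θ (-1) [1, m + 1, m / 2, 1, 3, (m - 14) / 14, 1, 6, m / 6]) ∧
    (m % 14 = 2 → 156 ≤ m →
      cfBegins θ (-1) [1, m + 1, m / 2, 1, 3, (m - 2) / 14, (49 * m + 72) / 6]) ∧
    (m % 14 = 4 → 18 ≤ m →
      cfBegins θ (-1) [1, m + 1, m / 2, 1, 3, (m - 4) / 14, 6, 1, (m - 4) / 6]) ∧
    (m % 14 = 6 → 20 ≤ m →
      cfBegins θ (-1) [1, m + 1, m / 2, 1, 3, (m - 6) / 14, 3, 2, (m - 2) / 6]) ∧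
    (m % 14 = 8 → 22 ≤ m →
      cfBegins θ (-1) [1, m + 1, m / 2, 1, 3, (m - 8) / 14, 2, 3, (m - 2) / 6]) ∧
    (m % 14 = 10 → 24 ≤ m →
      cfBegins θ (-1) [1, m + 1, m / 2, 1, 3, (m - 10) / 14, 1, 1, 2, 1, (m - 4) / 6]) ∧
    (m % 14 = 12 → 68 ≤ m →
      cfBegins θ (-1) [1, m + 1, m / 2, 1, 3, (m - 12) / 14, 1, 2, 1, 1, (m - 2) / 6]) := by
  obtain ⟨j, hj⟩ : ∃ j, j = m / 14 := ⟨_, rfl⟩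
  refine ⟨?_, ?_, ?_, ?_, ?_, ?_, ?_⟩
  · intro h1 h2
    obtain rfl : m = 14 * j := by omega
    push_cast at hroot
    have e1 : (14 * j) / 2 = 7 * j := by omega
    have e2 : (14 * j - 14) / 14 = j - 1 := by omega
    rw [e1, e2]
    exact case_0 j _ (by omega) (by omega) (by omega) θ
      (by linear_combination hroot) hθl hθr
  · intro h1 h2
    obtain rfl : m = 14 * j + 2 := by omega
    push_cast at hroot
    have e1 : (14 * j + 2) / 2 = 7 * j + 1 := by omega
    have e2 : (14 * j + 2 - 2) / 14 = j := by omega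
    rw [e1, e2]
    rcases eq_or_ne j 11 with h11 | h11
    · exact case_2_small j _ (by omega) (by omega) (by omega) θ
        (by linear_combination hroot) hθl hθr
    · exact case_2 j _ (by omega) (by omega) (by omega) θ
        (by linear_combination hroot) hθl hθr
  · intro h1 h2
    obtain rfl : m = 14 * j + 4 := by omega
    push_cast at hroot
    have e1 : (14 * j + 4) / 2 = 7 * j + 2 := by omega
    have e2 : (14 * j + 4 - 4) / 14 = j := by omega
    rw [e1, e2]
    exact case_4 j _ (by omega) (by omega) (by omega) θ
      (by linear_combination hroot) hθl hθr
  · intro h1 h2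
    obtain rfl : m = 14 * j + 6 := by omega
    push_cast at hroot
    have e1 : (14 * j + 6) / 2 = 7 * j + 3 := by omega
    have e2 : (14 * j + 6 - 6) / 14 = j := by omega
    rw [e1, e2]
    exact case_6 j _ (by omega) (by omega) (by omega) θ
      (by linear_combination hroot) hθl hθr
  · intro h1 h2
    obtain rfl : m = 14 * j + 8 := by omega
    push_cast at hroot
    have e1 : (14 * j + 8) / 2 = 7 * j + 4 := by omega
    have e2 : (14 * j + 8 - 8) / 14 = j := by omega
    rw [e1, e2]
    exact case_8 j _ (by omega) (by omega) (by omega) θ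
      (by linear_combination hroot) hθl hθr
  · intro h1 h2
    obtain rfl : m = 14 * j + 10 := by omega
    push_cast at hroot
    have e1 : (14 * j + 10) / 2 = 7 * j + 5 := by omega
    have e2 : (14 * j + 10 - 10) / 14 = j := by omega
    rw [e1, e2]
    exact case_10 j _ (by omega) (by omega) (by omega) θ
      (by linear_combination hroot) hθl hθr
  · intro h1 h2
    obtain rfl : m = 14 * j + 12 := by omega
    push_cast at hroot
    have e1 : (14 * j + 12) / 2 = 7 * j + 6 := by omega
    have e2 : (14 * j + 12 - 12) / 14 = j := by omega
    rw [e1, e2]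
    exact case_12 j _ (by omega) (by omega) (by omega) θ
      (by linear_combination hroot) hθl hθr
end
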